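/- arXiv:2605.26506 — 3 statements merged into one kernel-verified Lean document; each statement's English description precedes it below -/
import Mathlib

section
/- For every s ∈ (1,3) there exists a constant C = C(s) > 0 such that for every smooth vector field ξ : ℝ³ → ℝ³ with compact support contained in ℝ³ \ {0}, one has the weighted div-curl estimate ∫_{ℝ³} ( |x|^{s-2} Σ_{i,j=1}^{3} (∂_i ξ_j)² + |x|^{s-4} |ξ|² ) dx ≤ C ∫_{ℝ³} |x|^{s-2} ( (div ξ)² + |curl ξ|² ) dx. -/
open MeasureTheory

/-- The Euclidean norm on `ℝ³`. -/
noncomputable def enorm3 (x : Fin 3 → ℝ) : ℝ := Real.sqrt (∑ i, (x i) ^ 2)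

/-- The partial derivative `∂_i ξ_j` of a vector field on `ℝ³`. -/
noncomputable def pdc (ξ : (Fin 3 → ℝ) → Fin 3 → ℝ) (i j : Fin 3) (x : Fin 3 → ℝ) : ℝ :=
  fderiv ℝ ξ x (Pi.single i 1) j

/-- The Levi-Civita symbol on three indices, with `ε_{123} = 1`. -/
noncomputable def eps3 (i j k : Fin 3) : ℝ :=
  (((j : ℕ) : ℝ) - ((i : ℕ) : ℝ)) * (((k : ℕ) : ℝ) - ((i : ℕ) : ℝ)) *
    (((k : ℕ) : ℝ) - ((j : ℕ) : ℝ)) / 2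

/-- The divergence `div ξ = Σ_i ∂_i ξ_i`. -/
noncomputable def div3 (ξ : (Fin 3 → ℝ) → Fin 3 → ℝ) (x : Fin 3 → ℝ) : ℝ :=
  ∑ i, pdc ξ i i x

/-- The curl `(curl ξ)_i = Σ_{j,k} ε_{ijk} ∂_j ξ_k`. -/
noncomputable def curl3 (ξ : (Fin 3 → ℝ) → Fin 3 → ℝ) (i : Fin 3) (x : Fin 3 → ℝ) : ℝ :=
  ∑ j, ∑ k, eps3 i j k * pdc ξ j k x

/-!
Write `η = |x|^{a/2} ξ` with `a = s - 2`. The `2 × 2` minors `∂ᵢηⱼ ∂ⱼηᵢ - ∂ᵢηᵢ ∂ⱼηⱼ` integrate to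
zero, so `∫ |∇η|² = ∫ (|div η|² + |curl η|²)`. The Jacobian of `η` is `|x|^{a/2} ∇ξ` plus the
rank-one matrix `(a/2) |x|^{a/2-2} x ⊗ ξ`, and both quadratic forms take the value `|x|² |ξ|²` at
`x ⊗ ξ`. Hardy's inequality for `η` with its sharp constant `((n-2)/2)²` bounds the contribution of
the rank-one term by `(a/(n-2))² ∫ |∇η|²`, which can be absorbed exactly when `|a| < n - 2`; for
`n = 3` this is `1 < s < 3`.
-/

section IntegrationByParts

open Module

variable {E : Type*} [NormedAddCommGroup E] [NormedSpace ℝ E] [FiniteDimensional ℝ E]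
  [MeasurableSpace E] [BorelSpace E] {μ : Measure E} [μ.IsAddHaarMeasure] {f g : E → ℝ}

theorem integral_mul_fderiv_eq_neg_fderiv_mul_of_hasCompactSupport (hf : ContDiff ℝ 1 f)
    (hg : ContDiff ℝ 1 g) (hgc : HasCompactSupport g) (v : E) :
    ∫ x, f x * fderiv ℝ g x v ∂μ = -∫ x, fderiv ℝ f x v * g x ∂μ := by
  have hf' : Continuous fun x => fderiv ℝ f x v :=
    (hf.continuous_fderiv one_ne_zero).clm_apply continuous_const
  have hg' : Continuous fun x => fderiv ℝ g x v :=
    (hg.continuous_fderiv one_ne_zero).clm_apply continuous_const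
  refine integral_mul_fderiv_eq_neg_fderiv_mul_of_integrable ?_ ?_ ?_
    (fun x _ => hf.differentiable one_ne_zero x) (fun x _ => hg.differentiable one_ne_zero x)
  · exact (hf'.mul hg.continuous).integrable_of_hasCompactSupport hgc.mul_left
  · exact (hf.continuous.mul hg').integrable_of_hasCompactSupport (hgc.fderiv_apply ℝ v).mul_left
  · exact (hf.continuous.mul hg.continuous).integrable_of_hasCompactSupport hgc.mul_left

theorem integral_fderiv_apply_self (hg : ContDiff ℝ 1 g) (hgc : HasCompactSupport g) :
    ∫ x, fderiv ℝ g x x ∂μ = -(finrank ℝ E * ∫ x, g x ∂μ) := by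
  let b := finBasis ℝ E
  let coord i : E →L[ℝ] ℝ := LinearMap.toContinuousLinearMap (b.coord i)
  have expand x : fderiv ℝ g x x = ∑ i, coord i x * fderiv ℝ g x (b i) := by
    conv_lhs => rw [← b.sum_repr x, map_sum]
    simp [coord, b.sum_repr x]
  have by_parts i : ∫ x, coord i x * fderiv ℝ g x (b i) ∂μ = -∫ x, g x ∂μ := by
    rw [integral_mul_fderiv_eq_neg_fderiv_mul_of_hasCompactSupport (coord i).contDiff hg hgc]
    simp only [(coord i).fderiv]
    simp [coord]
  have integrable i : Integrable (fun x => coord i x * fderiv ℝ g x (b i)) μ :=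
    ((coord i).continuous.mul ((hg.continuous_fderiv one_ne_zero).clm_apply
      continuous_const)).integrable_of_hasCompactSupport (hgc.fderiv_apply ℝ (b i)).mul_left
  simp only [expand, integral_finsetSum _ fun i _ => integrable i, by_parts]
  simp

theorem integral_fderiv_mul_fderiv_comm (hf : ContDiff ℝ 1 f) (hg : ContDiff ℝ 2 g)
    (hgc : HasCompactSupport g) (u v : E) :
    ∫ x, fderiv ℝ f x u * fderiv ℝ g x v ∂μ = ∫ x, fderiv ℝ f x v * fderiv ℝ g x u ∂μ := by
  have hg' : ContDiff ℝ 1 (fderiv ℝ g) := hg.fderiv_right (by norm_num)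
  have second_deriv w z x : fderiv ℝ (fun y => fderiv ℝ g y w) x z =
      fderiv ℝ (fderiv ℝ g) x z w := by
    rw [fderiv_clm_apply (hg'.differentiable one_ne_zero x) (differentiableAt_const w)]
    simp
  have by_parts w z : ∫ x, fderiv ℝ f x z * fderiv ℝ g x w ∂μ =
      -∫ x, f x * fderiv ℝ (fderiv ℝ g) x z w ∂μ := by
    simp only [← second_deriv]
    rw [integral_mul_fderiv_eq_neg_fderiv_mul_of_hasCompactSupport hf (hg'.clm_apply contDiff_const)
      (hgc.fderiv_apply ℝ w), neg_neg]
  rw [by_parts, by_parts]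
  congr! 4 with x
  exact (hg.contDiffAt.isSymmSndFDerivAt (by simp)).eq u v

end IntegrationByParts

section NormRpow

theorem rpow_sub_two_mul_sq {r : ℝ} (hr : r ≠ 0) (a : ℝ) : r ^ (a - 2) * r ^ 2 = r ^ a := by
  rw [← Real.rpow_add_natCast hr, Nat.cast_ofNat, sub_add_cancel]

theorem rpow_div_two_sq {r : ℝ} (hr : 0 ≤ r) (a : ℝ) : (r ^ (a / 2)) ^ 2 = r ^ a := by
  rw [← Real.rpow_mul_natCast hr, Nat.cast_ofNat, div_mul_cancel₀ a two_ne_zero]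

theorem rpow_div_two_sub_two_sq_mul_sq {r : ℝ} (hr : 0 < r) (a : ℝ) :
    (r ^ (a / 2 - 2)) ^ 2 * r ^ 2 = r ^ (a - 2) := by
  rw [show a / 2 - 2 = (a - 2 - 2) / 2 by ring, rpow_div_two_sq hr.le, rpow_sub_two_mul_sq hr.ne']

variable {E F : Type*} [NormedAddCommGroup E] [InnerProductSpace ℝ E]

theorem contDiffAt_norm_rpow {x : E} (hx : x ≠ 0) (a : ℝ) {n : WithTop ℕ∞} :
    ContDiffAt ℝ n (fun y : E => ‖y‖ ^ a) x :=
  (contDiffAt_norm ℝ hx).rpow_const_of_ne (norm_ne_zero_iff.mpr hx)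

theorem hasFDerivAt_norm_rpow_of_ne_zero {x : E} (hx : x ≠ 0) (a : ℝ) :
    HasFDerivAt (fun y : E => ‖y‖ ^ a) ((a * ‖x‖ ^ (a - 2)) • innerSL ℝ x) x := by
  apply HasStrictFDerivAt.hasFDerivAt
  convert! (hasStrictFDerivAt_norm_sq x).rpow_const (p := a / 2) (by simp [hx]) using 0
  simp_rw [← Real.rpow_natCast_mul (norm_nonneg _), ← Nat.cast_smul_eq_nsmul ℝ, smul_smul]
  ring_nf

theorem contDiff_norm_rpow_smul [NormedAddCommGroup F] [NormedSpace ℝ F] {n : WithTop ℕ∞}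
    {f : E → F} (hf : ContDiff ℝ n f) (h0 : 0 ∉ tsupport f) (a : ℝ) :
    ContDiff ℝ n fun x => ‖x‖ ^ a • f x := by
  refine contMDiff_iff_contDiff.mp (contMDiff_of_tsupport fun x hx => ContDiffAt.contMDiffAt ?_)
  have hx0 : x ≠ 0 := ne_of_mem_of_not_mem (tsupport_smul_subset_right _ _ hx) h0
  exact (contDiffAt_norm_rpow hx0 a).smul hf.contDiffAt

theorem integrable_norm_rpow_mul [MeasurableSpace E] [OpensMeasurableSpace E] {μ : Measure E}
    [IsFiniteMeasureOnCompacts μ] [Zero F] {f : E → F} (hfc : HasCompactSupport f)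
    (h0 : 0 ∉ tsupport f) {g : E → ℝ} (hg : Continuous g) (hgf : Function.support g ⊆ tsupport f)
    (a : ℝ) : Integrable (fun x => ‖x‖ ^ a * g x) μ := by
  refine (continuous_of_tsupport fun x hx => ?_).integrable_of_hasCompactSupport
    (hfc.mono' hgf).mul_left
  have hx0 : x ≠ 0 := ne_of_mem_of_not_mem
    (closure_minimal hgf (isClosed_tsupport f) (tsupport_mul_subset_right hx)) h0
  exact (contDiffAt_norm_rpow (n := 0) hx0 a).continuousAt.mul hg.continuousAt

theorem integrable_norm_rpow_mul_norm_sq [MeasurableSpace E] [OpensMeasurableSpace E]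
    {μ : Measure E} [IsFiniteMeasureOnCompacts μ] [SeminormedAddGroup F] {f : E → F}
    (hf : Continuous f) (hfc : HasCompactSupport f) (h0 : 0 ∉ tsupport f) (a : ℝ) :
    Integrable (fun x => ‖x‖ ^ a * ‖f x‖ ^ 2) μ :=
  integrable_norm_rpow_mul hfc h0 (hf.norm.pow 2)
    (fun x hx => subset_tsupport f fun h => hx (by simp [h])) a

end NormRpow

section Hardy

open Module

variable {E F : Type*} [NormedAddCommGroup E] [InnerProductSpace ℝ E]
  [NormedAddCommGroup F] [InnerProductSpace ℝ F] {f : E → F}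

theorem fderiv_norm_rpow_mul_norm_sq_apply_self {x : E} (hx : x ≠ 0) (hf : DifferentiableAt ℝ f x)
    (a : ℝ) :
    fderiv ℝ (fun y => ‖y‖ ^ a * ‖f y‖ ^ 2) x x =
      a * (‖x‖ ^ a * ‖f x‖ ^ 2) + 2 * (‖x‖ ^ a * inner ℝ (f x) (fderiv ℝ f x x)) := by
  have h := ((hasFDerivAt_norm_rpow_of_ne_zero hx a).fun_mul hf.hasFDerivAt.norm_sq).fderiv
  simp only [h, add_apply, smul_apply, ContinuousLinearMap.coe_comp, Function.comp_apply,
    innerSL_apply_apply, real_inner_self_eq_norm_sq, smul_eq_mul, nsmul_eq_mul, Nat.cast_ofNat,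
    ← rpow_sub_two_mul_sq (norm_ne_zero_iff.mpr hx) a]
  ring

theorem neg_mul_norm_rpow_mul_inner_apply_self_le {x : E} (hx : x ≠ 0) (y : F) (L : E →L[ℝ] F)
    (m a : ℝ) :
    -(m * (‖x‖ ^ (a - 2) * inner ℝ y (L x))) ≤
      (m / 2) ^ 2 * (‖x‖ ^ (a - 2) * ‖y‖ ^ 2) + ‖x‖ ^ a * ‖L‖ ^ 2 := by
  have hsq : 0 ≤ ‖(m / 2) • y + L x‖ ^ 2 := sq_nonneg _
  rw [norm_add_sq_real, norm_smul, real_inner_smul_left, mul_pow, Real.norm_eq_abs, sq_abs] at hsq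
  have hop : ‖L x‖ ^ 2 ≤ (‖L‖ * ‖x‖) ^ 2 := by
    gcongr
    exact L.le_opNorm x
  calc -(m * (‖x‖ ^ (a - 2) * inner ℝ y (L x)))
      = ‖x‖ ^ (a - 2) * -(m * inner ℝ y (L x)) := by ring
    _ ≤ ‖x‖ ^ (a - 2) * ((m / 2) ^ 2 * ‖y‖ ^ 2 + (‖L‖ * ‖x‖) ^ 2) := by
      gcongr
      linarith
    _ = (m / 2) ^ 2 * (‖x‖ ^ (a - 2) * ‖y‖ ^ 2) + ‖x‖ ^ a * ‖L‖ ^ 2 := by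
      rw [← rpow_sub_two_mul_sq (norm_ne_zero_iff.mpr hx) a]
      ring

variable [FiniteDimensional ℝ E] [MeasurableSpace E] [BorelSpace E] {μ : Measure E}
  [μ.IsAddHaarMeasure]

theorem finrank_add_mul_integral_norm_rpow_mul_norm_sq (hf : ContDiff ℝ 1 f)
    (hfc : HasCompactSupport f) (h0 : 0 ∉ tsupport f) (a : ℝ) :
    (finrank ℝ E + a) * ∫ x, ‖x‖ ^ a * ‖f x‖ ^ 2 ∂μ =
      -(2 * ∫ x, ‖x‖ ^ a * inner ℝ (f x) (fderiv ℝ f x x) ∂μ) := by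
  have hf' := hf.continuous_fderiv one_ne_zero
  have hf0 : f 0 = 0 := image_eq_zero_of_notMem_tsupport h0
  have hsupp : tsupport (fun x => ‖f x‖ ^ 2) ⊆ tsupport f :=
    tsupport_comp_subset (g := fun y : F => ‖y‖ ^ 2) (by simp) f
  have hg : ContDiff ℝ 1 fun x => ‖x‖ ^ a * ‖f x‖ ^ 2 :=
    contDiff_norm_rpow_smul (hf.norm_sq ℝ) (fun h => h0 (hsupp h)) a
  have hgc : HasCompactSupport fun x => ‖x‖ ^ a * ‖f x‖ ^ 2 :=
    (hfc.comp_left (g := fun y : F => ‖y‖ ^ 2) (by simp)).mul_left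
  have pointwise x : fderiv ℝ (fun y => ‖y‖ ^ a * ‖f y‖ ^ 2) x x =
      a * (‖x‖ ^ a * ‖f x‖ ^ 2) + 2 * (‖x‖ ^ a * inner ℝ (f x) (fderiv ℝ f x x)) := by
    rcases eq_or_ne x 0 with rfl | hx
    · simp [hf0]
    · exact fderiv_norm_rpow_mul_norm_sq_apply_self hx (hf.differentiable one_ne_zero x) a
  have hint : Integrable (fun x => ‖x‖ ^ a * inner ℝ (f x) (fderiv ℝ f x x)) μ :=
    integrable_norm_rpow_mul hfc h0 (hf.continuous.inner (hf'.clm_apply continuous_id))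
      (fun x hx => subset_tsupport f fun h => hx (by simp [h])) a
  have dilation := integral_fderiv_apply_self (μ := μ) hg hgc
  simp only [pointwise] at dilation
  rw [integral_add ((hg.continuous.integrable_of_hasCompactSupport hgc).const_mul a)
    (hint.const_mul 2), integral_const_mul, integral_const_mul] at dilation
  linarith

theorem hardy_inequality (hf : ContDiff ℝ 1 f) (hfc : HasCompactSupport f)
    (h0 : 0 ∉ tsupport f) (a : ℝ) :
    ((finrank ℝ E + a - 2) / 2) ^ 2 * ∫ x, ‖x‖ ^ (a - 2) * ‖f x‖ ^ 2 ∂μ ≤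
      ∫ x, ‖x‖ ^ a * ‖fderiv ℝ f x‖ ^ 2 ∂μ := by
  set m : ℝ := finrank ℝ E + a - 2 with hm
  have hf' := hf.continuous_fderiv one_ne_zero
  have hf0 : f 0 = 0 := image_eq_zero_of_notMem_tsupport h0
  have hfd0 : fderiv ℝ f 0 = 0 :=
    image_eq_zero_of_notMem_tsupport fun h => h0 (tsupport_fderiv_subset ℝ h)
  have hF : Integrable (fun x => ‖x‖ ^ (a - 2) * ‖f x‖ ^ 2) μ :=
    integrable_norm_rpow_mul_norm_sq hf.continuous hfc h0 _
  have hI : Integrable (fun x => ‖x‖ ^ (a - 2) * inner ℝ (f x) (fderiv ℝ f x x)) μ :=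
    integrable_norm_rpow_mul hfc h0 (hf.continuous.inner (hf'.clm_apply continuous_id))
      (fun x hx => subset_tsupport f fun h => hx (by simp [h])) _
  have hD : Integrable (fun x => ‖x‖ ^ a * ‖fderiv ℝ f x‖ ^ 2) μ :=
    integrable_norm_rpow_mul hfc h0 (hf'.norm.pow 2)
      (fun x hx => support_fderiv_subset ℝ fun h => hx (by simp [h])) _
  have pointwise x : -(m * (‖x‖ ^ (a - 2) * inner ℝ (f x) (fderiv ℝ f x x))) ≤
      (m / 2) ^ 2 * (‖x‖ ^ (a - 2) * ‖f x‖ ^ 2) + ‖x‖ ^ a * ‖fderiv ℝ f x‖ ^ 2 := by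
    rcases eq_or_ne x 0 with rfl | hx
    · simp [hf0, hfd0]
    · exact neg_mul_norm_rpow_mul_inner_apply_self_le hx (f x) (fderiv ℝ f x) m a
  have key := integral_mono (hI.const_mul m).neg ((hF.const_mul ((m / 2) ^ 2)).add hD) pointwise
  simp only [Pi.add_apply, Pi.neg_apply] at key
  rw [integral_neg, integral_add (hF.const_mul _) hD, integral_const_mul, integral_const_mul] at key
  have virial := finrank_add_mul_integral_norm_rpow_mul_norm_sq (μ := μ) hf hfc h0 (a - 2)
  rw [← add_sub_assoc, ← hm] at virial
  linear_combination key + m / 2 * virial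

end Hardy

section Matrix

variable {ι : Type*} [Fintype ι]

/-- The square of the Frobenius norm of a matrix, written out as a sum because Mathlib has no
global norm instance on matrices. For a Jacobian it is `|∇ξ|²`. -/
def frobeniusSq (A : Matrix ι ι ℝ) : ℝ := ∑ i, ∑ j, A i j ^ 2

/-- The quadratic form on matrices whose value at the Jacobian of `ξ` is `|div ξ|² + |curl ξ|²`.
In arbitrary dimension the curl is the antisymmetric matrix `∂ᵢξⱼ - ∂ⱼξᵢ`; the factor `1 / 2`
makes each pair `{i, j}` count once. -/
noncomputable def divCurlSq (A : Matrix ι ι ℝ) : ℝ :=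
  A.trace ^ 2 + (∑ i, ∑ j, (A i j - A j i) ^ 2) / 2

theorem frobeniusSq_eq_divCurlSq_add (A : Matrix ι ι ℝ) :
    frobeniusSq A = divCurlSq A + ∑ i, ∑ j, (A i j * A j i - A i i * A j j) := by
  have htrace : A.trace ^ 2 = ∑ i, ∑ j, A i i * A j j := by
    simp only [Matrix.trace, Matrix.diag_apply, sq, Finset.sum_mul_sum]
  have hswap : ∑ i, ∑ j, A j i ^ 2 = ∑ i, ∑ j, A i j ^ 2 := Finset.sum_comm
  simp only [frobeniusSq, divCurlSq, htrace, sub_sq, Finset.sum_sub_distrib, Finset.sum_add_distrib,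
    hswap, mul_assoc, ← Finset.mul_sum]
  ring

theorem frobeniusSq_smul (c : ℝ) (A : Matrix ι ι ℝ) :
    frobeniusSq (c • A) = c ^ 2 * frobeniusSq A := by
  simp only [frobeniusSq, Matrix.smul_apply, smul_eq_mul, mul_pow, Finset.mul_sum]

theorem divCurlSq_smul (c : ℝ) (A : Matrix ι ι ℝ) :
    divCurlSq (c • A) = c ^ 2 * divCurlSq A := by
  simp only [divCurlSq, Matrix.trace_smul, Matrix.smul_apply, smul_eq_mul, ← mul_sub, mul_pow,
    ← Finset.mul_sum]
  ring

theorem frobeniusSq_vecMulVec (u v : ι → ℝ) :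
    frobeniusSq (Matrix.vecMulVec u v) = (∑ i, u i ^ 2) * ∑ i, v i ^ 2 := by
  simp only [frobeniusSq, Matrix.vecMulVec_apply, mul_pow, Finset.sum_mul_sum]

theorem divCurlSq_vecMulVec (u v : ι → ℝ) :
    divCurlSq (Matrix.vecMulVec u v) = (∑ i, u i ^ 2) * ∑ i, v i ^ 2 := by
  rw [← frobeniusSq_vecMulVec, frobeniusSq_eq_divCurlSq_add]
  simp [Matrix.vecMulVec_apply, mul_mul_mul_comm, mul_comm]

theorem add_sq_le_div_add_div {t : ℝ} (ht : 0 < t) (ht1 : t < 1) (p q : ℝ) :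
    (p + q) ^ 2 ≤ p ^ 2 / (1 - t) + q ^ 2 / t := by
  have h1 : 0 < 1 - t := sub_pos.mpr ht1
  have h : p ^ 2 / (1 - t) + q ^ 2 / t - (p + q) ^ 2 =
      (t * p - (1 - t) * q) ^ 2 / (t * (1 - t)) := by
    field_simp
    ring
  have : 0 ≤ (t * p - (1 - t) * q) ^ 2 / (t * (1 - t)) := by positivity
  linarith

theorem frobeniusSq_add_le (A B : Matrix ι ι ℝ) :
    frobeniusSq (A + B) ≤ 2 * (frobeniusSq A + frobeniusSq B) := by
  simp only [frobeniusSq, Matrix.add_apply, ← Finset.sum_add_distrib, Finset.mul_sum]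
  gcongr
  exact add_sq_le

theorem divCurlSq_add_le {t : ℝ} (ht : 0 < t) (ht1 : t < 1) (A B : Matrix ι ι ℝ) :
    divCurlSq (A + B) ≤ divCurlSq A / (1 - t) + divCurlSq B / t := by
  have htrace := add_sq_le_div_add_div ht ht1 A.trace B.trace
  have hcurl : ∑ i, ∑ j, ((A + B) i j - (A + B) j i) ^ 2 ≤
      (∑ i, ∑ j, (A i j - A j i) ^ 2) / (1 - t) + (∑ i, ∑ j, (B i j - B j i) ^ 2) / t := by
    simp only [Finset.sum_div, ← Finset.sum_add_distrib, Matrix.add_apply, add_sub_add_comm]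
    gcongr
    exact add_sq_le_div_add_div ht ht1 _ _
  rw [divCurlSq, Matrix.trace_add]
  calc _ ≤ _ := add_le_add htrace (div_le_div_of_nonneg_right hcurl zero_le_two)
    _ = _ := by simp only [divCurlSq]; ring

theorem frobeniusSq_zero : frobeniusSq (0 : Matrix ι ι ℝ) = 0 := by
  simp [frobeniusSq]

theorem divCurlSq_zero : divCurlSq (0 : Matrix ι ι ℝ) = 0 := by
  simp [divCurlSq]

theorem continuous_frobeniusSq : Continuous (frobeniusSq : Matrix ι ι ℝ → ℝ) := by
  unfold frobeniusSq
  fun_prop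

theorem continuous_divCurlSq : Continuous (divCurlSq : Matrix ι ι ℝ → ℝ) := by
  unfold divCurlSq Matrix.trace Matrix.diag
  fun_prop

end Matrix

section Jacobian

variable {ι : Type*} [DecidableEq ι]
  {ξ : EuclideanSpace ℝ ι → EuclideanSpace ℝ ι}

/-- The Jacobian matrix of a vector field, with `∂ᵢξⱼ` as its entry in row `i` and column `j`
(the transpose of the matrix of the derivative). -/
noncomputable def jacobian (ξ : EuclideanSpace ℝ ι → EuclideanSpace ℝ ι) (x : EuclideanSpace ℝ ι) :
    Matrix ι ι ℝ :=
  Matrix.of fun i j => fderiv ℝ ξ x (EuclideanSpace.single i 1) j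

theorem jacobian_eq_zero_of_notMem_tsupport {x : EuclideanSpace ℝ ι} (hx : x ∉ tsupport ξ) :
    jacobian ξ x = 0 := by
  have : fderiv ℝ ξ x = 0 := fderiv_of_notMem_tsupport ℝ hx
  ext i j
  simp [jacobian, this]

theorem support_comp_jacobian_subset {Φ : Matrix ι ι ℝ → ℝ} (hΦ : Φ 0 = 0) :
    (Function.support fun x => Φ (jacobian ξ x)) ⊆ tsupport ξ := fun x hx => by
  by_contra h
  exact hx (by simp only [jacobian_eq_zero_of_notMem_tsupport h, hΦ])

theorem jacobian_apply_eq_fderiv_apply [Finite ι] {x : EuclideanSpace ℝ ι}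
    (hξ : DifferentiableAt ℝ ξ x) (i j : ι) :
    jacobian ξ x i j = fderiv ℝ (fun y => ξ y j) x (EuclideanSpace.single i 1) := by
  have := Fintype.ofFinite ι
  have hcoord := (EuclideanSpace.proj j : EuclideanSpace ℝ ι →L[ℝ] ℝ).hasFDerivAt.comp x
    hξ.hasFDerivAt
  exact (congrArg (· (EuclideanSpace.single i 1)) hcoord.fderiv).symm

variable [Fintype ι]

theorem fderiv_apply_eq_sum_jacobian (x v : EuclideanSpace ℝ ι) (j : ι) :
    fderiv ℝ ξ x v j = ∑ i, v i * jacobian ξ x i j := by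
  conv_lhs => rw [← (EuclideanSpace.basisFun ι ℝ).sum_repr v]
  simp [jacobian]

theorem norm_fderiv_sq_le_frobeniusSq_jacobian (x : EuclideanSpace ℝ ι) :
    ‖fderiv ℝ ξ x‖ ^ 2 ≤ frobeniusSq (jacobian ξ x) := by
  have hnonneg : 0 ≤ frobeniusSq (jacobian ξ x) := by
    unfold frobeniusSq
    positivity
  rw [← Real.le_sqrt (norm_nonneg _) hnonneg]
  refine ContinuousLinearMap.opNorm_le_bound _ (Real.sqrt_nonneg _) fun v => ?_
  refine le_of_sq_le_sq ?_ (by positivity)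
  calc ‖fderiv ℝ ξ x v‖ ^ 2 = ∑ j, (∑ i, v i * jacobian ξ x i j) ^ 2 := by
        simp only [EuclideanSpace.real_norm_sq_eq, fderiv_apply_eq_sum_jacobian]
    _ ≤ ∑ j, (∑ i, v i ^ 2) * ∑ i, jacobian ξ x i j ^ 2 := by
      gcongr
      exact Finset.sum_mul_sq_le_sq_mul_sq _ _ _
    _ = (√(frobeniusSq (jacobian ξ x)) * ‖v‖) ^ 2 := by
      rw [mul_pow, Real.sq_sqrt hnonneg, EuclideanSpace.real_norm_sq_eq, ← Finset.mul_sum,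
        frobeniusSq, Finset.sum_comm, mul_comm]

theorem continuous_jacobian (hξ : ContDiff ℝ 1 ξ) : Continuous (jacobian ξ) :=
  continuous_matrix fun i j => by
    have := hξ.continuous_fderiv one_ne_zero
    unfold jacobian
    fun_prop

theorem jacobian_norm_rpow_smul (hξ : Differentiable ℝ ξ) (h0 : 0 ∉ tsupport ξ) (c : ℝ)
    (x : EuclideanSpace ℝ ι) :
    jacobian (fun y => ‖y‖ ^ c • ξ y) x =
      ‖x‖ ^ c • jacobian ξ x + (c * ‖x‖ ^ (c - 2)) • Matrix.vecMulVec x (ξ x) := by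
  rcases eq_or_ne x 0 with rfl | hx
  · rw [jacobian_eq_zero_of_notMem_tsupport h0, jacobian_eq_zero_of_notMem_tsupport
      fun h => h0 (tsupport_smul_subset_right _ _ h)]
    simp
  have h := ((hasFDerivAt_norm_rpow_of_ne_zero hx c).fun_smul (hξ x).hasFDerivAt).fderiv
  ext i j
  simp [jacobian, h, Matrix.vecMulVec_apply, EuclideanSpace.inner_single_right, mul_assoc]

theorem integrable_comp_jacobian (hξ : ContDiff ℝ 1 ξ) (hξc : HasCompactSupport ξ)
    {Φ : Matrix ι ι ℝ → ℝ} (hΦ : Continuous Φ) (hΦ0 : Φ 0 = 0) :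
    Integrable fun x => Φ (jacobian ξ x) :=
  (hΦ.comp (continuous_jacobian hξ)).integrable_of_hasCompactSupport
    (hξc.mono' (support_comp_jacobian_subset hΦ0))

theorem integral_frobeniusSq_jacobian (hξ : ContDiff ℝ 2 ξ) (hξc : HasCompactSupport ξ) :
    ∫ x, frobeniusSq (jacobian ξ x) = ∫ x, divCurlSq (jacobian ξ x) := by
  have hξ1 : ContDiff ℝ 1 ξ := hξ.of_le one_le_two
  have hcomp (j : ι) : ContDiff ℝ 2 fun x => ξ x j := by fun_prop
  have hcompc (j : ι) : HasCompactSupport fun x => ξ x j :=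
    hξc.comp_left (g := fun v : EuclideanSpace ℝ ι => v j) rfl
  have hprod (i j k l : ι) : Integrable fun x => jacobian ξ x i j * jacobian ξ x k l :=
    integrable_comp_jacobian hξ1 hξc (Φ := fun A => A i j * A k l) (by fun_prop) (by simp)
  have hminor (i j : ι) : Integrable fun x =>
      jacobian ξ x i j * jacobian ξ x j i - jacobian ξ x i i * jacobian ξ x j j :=
    (hprod i j j i).sub (hprod i i j j)
  have integral_minor (i j : ι) :
      ∫ x, (jacobian ξ x i j * jacobian ξ x j i - jacobian ξ x i i * jacobian ξ x j j) = 0 := by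
    rw [integral_sub (hprod i j j i) (hprod i i j j), sub_eq_zero]
    simp only [jacobian_apply_eq_fderiv_apply (hξ1.differentiable one_ne_zero _)]
    rw [integral_fderiv_mul_fderiv_comm (hcomp j |>.of_le one_le_two) (hcomp i) (hcompc i)]
    simp only [mul_comm]
  simp only [frobeniusSq_eq_divCurlSq_add]
  rw [integral_add (integrable_comp_jacobian hξ1 hξc continuous_divCurlSq divCurlSq_zero)
    (integrable_finsetSum _ fun i _ => integrable_finsetSum _ fun j _ => hminor i j),
    integral_finsetSum _ fun i _ => integrable_finsetSum _ fun j _ => hminor i j]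
  simp only [integral_finsetSum _ fun j _ => hminor _ j, integral_minor, Finset.sum_const_zero,
    add_zero]

end Jacobian

section Weighted

variable {ι : Type*} [Fintype ι] {ξ : EuclideanSpace ℝ ι → EuclideanSpace ℝ ι}

theorem sq_norm_rpow_mul_sum_sq_mul_sum_sq (h0 : 0 ∉ tsupport ξ) (a : ℝ) (x : EuclideanSpace ℝ ι) :
    (a / 2 * ‖x‖ ^ (a / 2 - 2)) ^ 2 * ((∑ i, x i ^ 2) * ∑ i, ξ x i ^ 2) =
      (a / 2) ^ 2 * (‖x‖ ^ (a - 2) * ‖ξ x‖ ^ 2) := by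
  rcases eq_or_ne x 0 with rfl | hx
  · simp [image_eq_zero_of_notMem_tsupport h0]
  rw [← EuclideanSpace.real_norm_sq_eq x, ← EuclideanSpace.real_norm_sq_eq (ξ x),
    ← rpow_div_two_sub_two_sq_mul_sq (norm_pos_iff.mpr hx) a]
  ring

variable [DecidableEq ι]

theorem divCurlSq_jacobian_norm_rpow_smul_le {t : ℝ} (ht : 0 < t) (ht1 : t < 1)
    (hξ : Differentiable ℝ ξ) (h0 : 0 ∉ tsupport ξ) (a : ℝ) (x : EuclideanSpace ℝ ι) :
    divCurlSq (jacobian (fun y => ‖y‖ ^ (a / 2) • ξ y) x) ≤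
      ‖x‖ ^ a * divCurlSq (jacobian ξ x) / (1 - t) +
        (a / 2) ^ 2 * (‖x‖ ^ (a - 2) * ‖ξ x‖ ^ 2) / t := by
  rw [jacobian_norm_rpow_smul hξ h0]
  refine (divCurlSq_add_le ht ht1 _ _).trans_eq ?_
  rw [divCurlSq_smul, divCurlSq_smul, divCurlSq_vecMulVec, rpow_div_two_sq (norm_nonneg x),
    sq_norm_rpow_mul_sum_sq_mul_sum_sq h0]

theorem norm_rpow_mul_frobeniusSq_jacobian_le (hξ : Differentiable ℝ ξ) (h0 : 0 ∉ tsupport ξ)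
    (a : ℝ) (x : EuclideanSpace ℝ ι) :
    ‖x‖ ^ a * frobeniusSq (jacobian ξ x) ≤
      2 * (frobeniusSq (jacobian (fun y => ‖y‖ ^ (a / 2) • ξ y) x) +
        (a / 2) ^ 2 * (‖x‖ ^ (a - 2) * ‖ξ x‖ ^ 2)) := by
  set B := (-(a / 2 * ‖x‖ ^ (a / 2 - 2))) • Matrix.vecMulVec x (ξ x) with hB
  have hJ : ‖x‖ ^ (a / 2) • jacobian ξ x = jacobian (fun y => ‖y‖ ^ (a / 2) • ξ y) x + B := by
    rw [jacobian_norm_rpow_smul hξ h0, hB, neg_smul, add_neg_cancel_right]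
  rw [← rpow_div_two_sq (norm_nonneg x), ← frobeniusSq_smul, hJ]
  refine (frobeniusSq_add_le _ _).trans_eq ?_
  rw [hB, frobeniusSq_smul, frobeniusSq_vecMulVec, neg_sq, sq_norm_rpow_mul_sum_sq_mul_sum_sq h0]

theorem integrable_norm_rpow_mul_comp_jacobian (hξ : ContDiff ℝ 1 ξ) (hξc : HasCompactSupport ξ)
    (h0 : 0 ∉ tsupport ξ) {Φ : Matrix ι ι ℝ → ℝ} (hΦ : Continuous Φ) (hΦ0 : Φ 0 = 0) (a : ℝ) :
    Integrable fun x => ‖x‖ ^ a * Φ (jacobian ξ x) :=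
  integrable_norm_rpow_mul hξc h0 (hΦ.comp (continuous_jacobian hξ))
    (support_comp_jacobian_subset hΦ0) a

theorem hardy_inequality_jacobian_norm_rpow_smul (hξ : ContDiff ℝ 1 ξ) (hξc : HasCompactSupport ξ)
    (h0 : 0 ∉ tsupport ξ) (a : ℝ) :
    ((Fintype.card ι - 2 : ℝ) / 2) ^ 2 * ∫ x, ‖x‖ ^ (a - 2) * ‖ξ x‖ ^ 2 ≤
      ∫ x, frobeniusSq (jacobian (fun y => ‖y‖ ^ (a / 2) • ξ y) x) := by
  set η : EuclideanSpace ℝ ι → EuclideanSpace ℝ ι := fun y => ‖y‖ ^ (a / 2) • ξ y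
  have hη : ContDiff ℝ 1 η := contDiff_norm_rpow_smul hξ h0 (a / 2)
  have hηc : HasCompactSupport η := hξc.smul_left (f := fun y => ‖y‖ ^ (a / 2))
  have hη0 : 0 ∉ tsupport η := fun h => h0 (tsupport_smul_subset_right _ _ h)
  have hweight x : ‖x‖ ^ (0 - 2 : ℝ) * ‖η x‖ ^ 2 = ‖x‖ ^ (a - 2) * ‖ξ x‖ ^ 2 := by
    rcases eq_or_ne x 0 with rfl | hx
    · simp [η, image_eq_zero_of_notMem_tsupport h0]
    have hx' := norm_pos_iff.mpr hx
    rw [norm_smul, mul_pow, Real.norm_of_nonneg (by positivity), rpow_div_two_sq hx'.le,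
      ← mul_assoc, ← Real.rpow_add hx']
    ring_nf
  have hHardy := hardy_inequality (μ := volume) hη hηc hη0 0
  simp only [hweight, Real.rpow_zero, one_mul, finrank_euclideanSpace, add_zero] at hHardy
  exact hHardy.trans <| integral_mono_of_nonneg (.of_forall fun x => sq_nonneg _)
    (integrable_comp_jacobian hη hηc continuous_frobeniusSq frobeniusSq_zero)
    (.of_forall norm_fderiv_sq_le_frobeniusSq_jacobian)

theorem integral_frobeniusSq_jacobian_norm_rpow_smul_le {t : ℝ} (ht : 0 < t) (ht1 : t < 1)
    (hξ : ContDiff ℝ 2 ξ) (hξc : HasCompactSupport ξ) (h0 : 0 ∉ tsupport ξ) (a : ℝ) :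
    ∫ x, frobeniusSq (jacobian (fun y => ‖y‖ ^ (a / 2) • ξ y) x) ≤
      (∫ x, ‖x‖ ^ a * divCurlSq (jacobian ξ x)) / (1 - t) +
        (a / 2) ^ 2 * (∫ x, ‖x‖ ^ (a - 2) * ‖ξ x‖ ^ 2) / t := by
  have hξ1 : ContDiff ℝ 1 ξ := hξ.of_le one_le_two
  have hη : ContDiff ℝ 2 fun y => ‖y‖ ^ (a / 2) • ξ y := contDiff_norm_rpow_smul hξ h0 (a / 2)
  have hηc : HasCompactSupport fun y => ‖y‖ ^ (a / 2) • ξ y :=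
    hξc.smul_left (f := fun y => ‖y‖ ^ (a / 2))
  have hDint := (integrable_norm_rpow_mul_comp_jacobian hξ1 hξc h0 continuous_divCurlSq
    divCurlSq_zero a).div_const (1 - t)
  have hHint := ((integrable_norm_rpow_mul_norm_sq (μ := volume) hξ.continuous hξc h0
    (a - 2)).const_mul ((a / 2) ^ 2)).div_const t
  rw [integral_frobeniusSq_jacobian hη hηc, ← integral_const_mul, ← integral_div, ← integral_div,
    ← integral_add hDint hHint]
  exact integral_mono (integrable_comp_jacobian (hη.of_le one_le_two) hηc continuous_divCurlSq
    divCurlSq_zero) (hDint.add hHint) (divCurlSq_jacobian_norm_rpow_smul_le ht ht1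
      (hξ1.differentiable one_ne_zero) h0 a)

theorem one_sub_sq_mul_integral_frobeniusSq_jacobian_le {δ a : ℝ} (hδ : 0 < δ) (hδ1 : δ < 1)
    (ha : |a| ≤ δ * (Fintype.card ι - 2)) (hξ : ContDiff ℝ 2 ξ) (hξc : HasCompactSupport ξ)
    (h0 : 0 ∉ tsupport ξ) :
    (1 - δ) ^ 2 * ∫ x, frobeniusSq (jacobian (fun y => ‖y‖ ^ (a / 2) • ξ y) x) ≤
      ∫ x, ‖x‖ ^ a * divCurlSq (jacobian ξ x) := by
  have hHardy := hardy_inequality_jacobian_norm_rpow_smul (hξ.of_le one_le_two) hξc h0 a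
  have hsplit := integral_frobeniusSq_jacobian_norm_rpow_smul_le hδ hδ1 hξ hξc h0 a
  set N := ∫ x, frobeniusSq (jacobian (fun y => ‖y‖ ^ (a / 2) • ξ y) x)
  set D := ∫ x, ‖x‖ ^ a * divCurlSq (jacobian ξ x)
  set H := ∫ x, ‖x‖ ^ (a - 2) * ‖ξ x‖ ^ 2
  have : 0 ≤ H := by positivity
  have hcorrection : (a / 2) ^ 2 * H / δ ≤ δ * N := by
    rw [div_le_iff₀ hδ]
    calc (a / 2) ^ 2 * H = (|a| / 2) ^ 2 * H := by rw [div_pow, div_pow, sq_abs]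
      _ ≤ (δ * (Fintype.card ι - 2) / 2) ^ 2 * H := by gcongr
      _ = δ ^ 2 * (((Fintype.card ι - 2 : ℝ) / 2) ^ 2 * H) := by ring
      _ ≤ δ ^ 2 * N := by gcongr
      _ = δ * N * δ := by ring
  have habsorb : (1 - δ) * N ≤ D / (1 - δ) := by linarith
  rwa [le_div_iff₀ (sub_pos.mpr hδ1), mul_right_comm, ← sq] at habsorb

theorem integral_norm_rpow_mul_frobeniusSq_jacobian_le (hξ : ContDiff ℝ 1 ξ)
    (hξc : HasCompactSupport ξ) (h0 : 0 ∉ tsupport ξ) (a : ℝ) :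
    ∫ x, ‖x‖ ^ a * frobeniusSq (jacobian ξ x) ≤
      2 * ((∫ x, frobeniusSq (jacobian (fun y => ‖y‖ ^ (a / 2) • ξ y) x)) +
        (a / 2) ^ 2 * ∫ x, ‖x‖ ^ (a - 2) * ‖ξ x‖ ^ 2) := by
  have hη : ContDiff ℝ 1 fun y => ‖y‖ ^ (a / 2) • ξ y := contDiff_norm_rpow_smul hξ h0 (a / 2)
  have hηc : HasCompactSupport fun y => ‖y‖ ^ (a / 2) • ξ y :=
    hξc.smul_left (f := fun y => ‖y‖ ^ (a / 2))
  have hNint := integrable_comp_jacobian hη hηc continuous_frobeniusSq frobeniusSq_zero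
  have hHint := (integrable_norm_rpow_mul_norm_sq (μ := volume) hξ.continuous hξc h0
    (a - 2)).const_mul ((a / 2) ^ 2)
  rw [← integral_const_mul, ← integral_add hNint hHint, ← integral_const_mul]
  exact integral_mono (integrable_norm_rpow_mul_comp_jacobian hξ hξc h0 continuous_frobeniusSq
    frobeniusSq_zero a) ((hNint.add hHint).const_mul 2)
    (norm_rpow_mul_frobeniusSq_jacobian_le (hξ.differentiable one_ne_zero) h0 a)

theorem weighted_div_curl_estimate_general {a : ℝ} (ha : |a| < Fintype.card ι - 2) :
    ∃ C > 0, ∀ ξ : EuclideanSpace ℝ ι → EuclideanSpace ℝ ι, ContDiff ℝ 2 ξ → HasCompactSupport ξ →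
      0 ∉ tsupport ξ →
      ∫ x, (‖x‖ ^ a * frobeniusSq (jacobian ξ x) + ‖x‖ ^ (a - 2) * ‖ξ x‖ ^ 2) ≤
        C * ∫ x, ‖x‖ ^ a * divCurlSq (jacobian ξ x) := by
  set m : ℝ := Fintype.card ι - 2 with hm
  have hm0 : 0 < m := (abs_nonneg a).trans_lt ha
  obtain ⟨δ, haδ, hδ1⟩ := exists_between ((div_lt_one hm0).mpr ha)
  have hδ : 0 < δ := (by positivity : 0 ≤ |a| / m).trans_lt haδ
  have haδ' : |a| ≤ δ * m := ((div_lt_iff₀ hm0).mp haδ).le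
  have : 0 < 1 - δ := sub_pos.mpr hδ1
  refine ⟨(2 * (1 + (a / m) ^ 2) + (2 / m) ^ 2) / (1 - δ) ^ 2, by positivity, fun ξ hξ hξc h0 => ?_⟩
  have hξ1 : ContDiff ℝ 1 ξ := hξ.of_le one_le_two
  have hgrad := integral_norm_rpow_mul_frobeniusSq_jacobian_le hξ1 hξc h0 a
  have hHardy := hardy_inequality_jacobian_norm_rpow_smul hξ1 hξc h0 a
  have hdivcurl := one_sub_sq_mul_integral_frobeniusSq_jacobian_le hδ hδ1 haδ' hξ hξc h0
  rw [integral_add (integrable_norm_rpow_mul_comp_jacobian hξ1 hξc h0 continuous_frobeniusSq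
    frobeniusSq_zero a) (integrable_norm_rpow_mul_norm_sq hξ.continuous hξc h0 (a - 2))]
  rw [← hm] at hHardy
  set N := ∫ x, frobeniusSq (jacobian (fun y => ‖y‖ ^ (a / 2) • ξ y) x)
  set H := ∫ x, ‖x‖ ^ (a - 2) * ‖ξ x‖ ^ 2
  calc _ ≤ 2 * (N + (a / 2) ^ 2 * H) + H := by gcongr
    _ = 2 * N + (2 * (a / m) ^ 2 + (2 / m) ^ 2) * ((m / 2) ^ 2 * H) := by
      field_simp
      ring
    _ ≤ 2 * N + (2 * (a / m) ^ 2 + (2 / m) ^ 2) * N := by gcongr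
    _ = (2 * (1 + (a / m) ^ 2) + (2 / m) ^ 2) / (1 - δ) ^ 2 * ((1 - δ) ^ 2 * N) := by
      field_simp
      ring
    _ ≤ _ := by gcongr

end Weighted

section EuclideanField

variable {ι : Type*} {ξ : (ι → ℝ) → ι → ℝ}

/-- The vector field on Euclidean space given by a vector field on `ι → ℝ`, whose own norm is the
sup norm; the two spaces have the same coordinates. -/
def euclideanField (ξ : (ι → ℝ) → ι → ℝ) (y : EuclideanSpace ℝ ι) : EuclideanSpace ℝ ι :=
  WithLp.toLp 2 (ξ (WithLp.ofLp y))

theorem euclideanField_eq_comp :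
    euclideanField ξ = (EuclideanSpace.equiv ι ℝ).symm ∘ ξ ∘ EuclideanSpace.equiv ι ℝ :=
  rfl

theorem tsupport_euclideanField :
    tsupport (euclideanField ξ) = EuclideanSpace.equiv ι ℝ ⁻¹' tsupport ξ := by
  rw [← ContinuousLinearEquiv.coe_toHomeomorph, ← tsupport_comp_eq_preimage, tsupport, tsupport,
    euclideanField_eq_comp]
  congr 1
  exact Function.support_comp_eq _ (by simp) _

theorem hasCompactSupport_euclideanField (hξ : HasCompactSupport ξ) :
    HasCompactSupport (euclideanField ξ) :=
  (hξ.comp_homeomorph (EuclideanSpace.equiv ι ℝ).toHomeomorph).comp_left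
    (map_zero (EuclideanSpace.equiv ι ℝ).symm)

theorem jacobian_euclideanField [Finite ι] [DecidableEq ι] (y : EuclideanSpace ℝ ι) (i j : ι) :
    jacobian (euclideanField ξ) y i j = fderiv ℝ ξ (WithLp.ofLp y) (Pi.single i 1) j := by
  have := Fintype.ofFinite ι
  rw [jacobian, euclideanField_eq_comp, ContinuousLinearEquiv.comp_fderiv,
    ContinuousLinearEquiv.comp_right_fderiv]
  rfl

variable [Fintype ι]

theorem norm_euclideanField_sq (y : EuclideanSpace ℝ ι) :
    ‖euclideanField ξ y‖ ^ 2 = ∑ i, ξ (WithLp.ofLp y) i ^ 2 :=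
  EuclideanSpace.real_norm_sq_eq _

theorem contDiff_euclideanField {n : WithTop ℕ∞} (hξ : ContDiff ℝ n ξ) :
    ContDiff ℝ n (euclideanField ξ) := by
  rw [euclideanField_eq_comp]
  fun_prop

theorem integral_comp_ofLp (f : (ι → ℝ) → ℝ) :
    ∫ y : EuclideanSpace ℝ ι, f (WithLp.ofLp y) = ∫ x, f x :=
  (PiLp.volume_preserving_ofLp ι).integral_comp
    (MeasurableEquiv.toLp 2 (ι → ℝ)).symm.measurableEmbedding f

end EuclideanField

section ThreeDimensional

variable {ξ : (Fin 3 → ℝ) → Fin 3 → ℝ}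

theorem enorm3_ofLp (y : EuclideanSpace ℝ (Fin 3)) : enorm3 (WithLp.ofLp y) = ‖y‖ := by
  rw [EuclideanSpace.norm_eq]
  simp [enorm3]

theorem frobeniusSq_jacobian_euclideanField (y : EuclideanSpace ℝ (Fin 3)) :
    frobeniusSq (jacobian (euclideanField ξ) y) = ∑ i, ∑ j, pdc ξ i j (WithLp.ofLp y) ^ 2 := by
  simp only [frobeniusSq, jacobian_euclideanField, pdc]

theorem divCurlSq_jacobian_euclideanField (y : EuclideanSpace ℝ (Fin 3)) :
    divCurlSq (jacobian (euclideanField ξ) y) =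
      div3 ξ (WithLp.ofLp y) ^ 2 + ∑ i, curl3 ξ i (WithLp.ofLp y) ^ 2 := by
  simp only [divCurlSq, Matrix.trace, Matrix.diag, jacobian_euclideanField, div3, curl3, pdc, eps3,
    Fin.sum_univ_three]
  norm_num
  ring

end ThreeDimensional

/-- Weighted div-curl estimate on `ℝ³`: for `s ∈ (1,3)` there is `C = C(s) > 0` such that
`∫ (|x|^{s-2} |∇ξ|² + |x|^{s-4} |ξ|²) ≤ C ∫ |x|^{s-2} ((div ξ)² + |curl ξ|²)` for every
smooth vector field `ξ` compactly supported away from the origin. -/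
theorem weighted_div_curl_estimate (s : ℝ) (hs1 : 1 < s) (hs3 : s < 3) :
    ∃ C > 0, ∀ ξ : (Fin 3 → ℝ) → Fin 3 → ℝ, ContDiff ℝ (⊤ : ℕ∞) ξ → HasCompactSupport ξ →
      (0 : Fin 3 → ℝ) ∉ tsupport ξ →
      ∫ x : Fin 3 → ℝ,
          (enorm3 x ^ (s - 2) * ∑ i, ∑ j, (pdc ξ i j x) ^ 2 +
            enorm3 x ^ (s - 4) * ∑ i, (ξ x i) ^ 2) ≤
        C * ∫ x : Fin 3 → ℝ,
          enorm3 x ^ (s - 2) * ((div3 ξ x) ^ 2 + ∑ i, (curl3 ξ i x) ^ 2) := by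
  have hs : |s - 2| < Fintype.card (Fin 3) - 2 := by
    rw [Fintype.card_fin, abs_lt]
    constructor <;> push_cast <;> linarith
  have hs4 : s - 4 = s - 2 - 2 := by ring
  obtain ⟨C, hC, hle⟩ := weighted_div_curl_estimate_general hs
  refine ⟨C, hC, fun ξ hξ hξc h0 => ?_⟩
  rw [← integral_comp_ofLp, ← integral_comp_ofLp]
  simpa only [hs4, enorm3_ofLp, frobeniusSq_jacobian_euclideanField,
    divCurlSq_jacobian_euclideanField, norm_euclideanField_sq] using
    hle (euclideanField ξ) (contDiff_euclideanField (contDiff_infty.mp hξ 2))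
      (hasCompactSupport_euclideanField hξc) (by rwa [tsupport_euclideanField])
end

section
/- Let W be a Weyl field on ℝ⁴, i.e. a smooth map assigning to each point p ∈ ℝ⁴ a Weyl tensor W(p), satisfying the vacuum Bianchi equations: Σ_{α,μ} η^{αμ} ∂_μ W_{αβγδ} = 0 for all β,γ,δ, and ∂_λ W_{αβγδ} + ∂_α W_{βλγδ} + ∂_β W_{λαγδ} = 0 for all indices. Then the Bel-Robinson tensor field Q (defined pointwise from W) is divergence-free: Σ_{α,μ} η^{αμ} ∂_μ Q_{αβγδ} = 0 on all of ℝ⁴, for all β, γ, δ. -/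
/-- The Minkowski metric `η` on `ℝ⁴` (and its inverse, which has the same components):
`η_{00} = -1`, `η_{11} = η_{22} = η_{33} = 1`, off-diagonal components zero. -/
noncomputable def eta (μ ν : Fin 4) : ℝ :=
  if μ = ν then (if μ = 0 then -1 else 1) else 0

/-- The Levi-Civita symbol on four indices, totally antisymmetric with `ε_{0123} = 1`. -/
noncomputable def eps4 (i j k l : Fin 4) : ℝ :=
  ((((j : ℕ) : ℝ) - ((i : ℕ) : ℝ)) * (((k : ℕ) : ℝ) - ((i : ℕ) : ℝ)) *
    (((l : ℕ) : ℝ) - ((i : ℕ) : ℝ)) * (((k : ℕ) : ℝ) - ((j : ℕ) : ℝ)) *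
    (((l : ℕ) : ℝ) - ((j : ℕ) : ℝ)) * (((l : ℕ) : ℝ) - ((k : ℕ) : ℝ))) / 12

/-- A Weyl tensor on `(ℝ⁴, η)`: antisymmetric in the first and last pairs of indices,
symmetric under exchange of the pairs, satisfying the first Bianchi identity, and
trace-free. -/
def IsWeylTensor (W : Fin 4 → Fin 4 → Fin 4 → Fin 4 → ℝ) : Prop :=
  (∀ α β γ δ, W α β γ δ = -W β α γ δ) ∧
  (∀ α β γ δ, W α β γ δ = -W α β δ γ) ∧
  (∀ α β γ δ, W α β γ δ = W γ δ α β) ∧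
  (∀ α β γ δ, W α β γ δ + W α γ δ β + W α δ β γ = 0) ∧
  (∀ α β, ∑ μ, ∑ ν, eta μ ν * W μ α ν β = 0)

/-- The Hodge dual `(*W)_{αβγδ} = (1/2) Σ η^{ρμ} η^{σν} ε_{αβρσ} W_{μνγδ}`. -/
noncomputable def hodge (W : Fin 4 → Fin 4 → Fin 4 → Fin 4 → ℝ)
    (α β γ δ : Fin 4) : ℝ :=
  (1 / 2) * ∑ μ, ∑ ν, ∑ ρ, ∑ σ, eta ρ μ * eta σ ν * eps4 α β ρ σ * W μ ν γ δ

/-- The Bel-Robinson tensor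
`Q_{αβγδ} = Σ η^{μρ} η^{νσ} (W_{αμβν} W_{γρδσ} + (*W)_{αμβν} (*W)_{γρδσ})`. -/
noncomputable def belRobinson (W : Fin 4 → Fin 4 → Fin 4 → Fin 4 → ℝ)
    (α β γ δ : Fin 4) : ℝ :=
  ∑ μ, ∑ ν, ∑ ρ, ∑ σ, eta μ ρ * eta ν σ *
    (W α μ β ν * W γ ρ δ σ + hodge W α μ β ν * hodge W γ ρ δ σ)

/-- The partial derivative `∂_μ f` on `ℝ⁴`. -/
noncomputable def pd4 (f : (Fin 4 → ℝ) → ℝ) (μ : Fin 4) (p : Fin 4 → ℝ) : ℝ :=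
  fderiv ℝ f p (Pi.single μ 1)

/-!
For fixed `γ, δ` the Bianchi equations say that the 2-form `W_{··γδ}` is a source-free Maxwell
field, and the Bel-Robinson tensor is a contraction of polarised Maxwell stress tensors
`T(F, G)_{αγ} = F_{αμ} G_γ^μ + *F_{αμ} *G_γ^μ`. So it is enough that `T(F, G)` is divergence-free.
The Maxwell equations are invariant under the Hodge dual, so `F` and `*F` are both
divergence-free, which kills the terms in which the derivative falls on `F`. In the others the
cyclic identity turns `F^{αμ} ∂_α G_{γμ}` into `½ ⟨F, ∂_γ G⟩`, and likewise for the duals; the two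
contributions cancel because `⟨*F, *G⟩ = -⟨F, G⟩` in Lorentzian signature.
-/

open scoped Topology

section PartialDerivative

variable {f g : (Fin 4 → ℝ) → ℝ} {p : Fin 4 → ℝ}

lemma pd4_add (hf : DifferentiableAt ℝ f p) (hg : DifferentiableAt ℝ g p) (m : Fin 4) :
    pd4 (fun q => f q + g q) m p = pd4 f m p + pd4 g m p := by
  simp [pd4, fderiv_fun_add hf hg]

lemma pd4_const_mul (hf : DifferentiableAt ℝ f p) (c : ℝ) (m : Fin 4) :
    pd4 (fun q => c * f q) m p = c * pd4 f m p := by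
  simp [pd4, fderiv_const_mul hf]

lemma pd4_mul (hf : DifferentiableAt ℝ f p) (hg : DifferentiableAt ℝ g p) (m : Fin 4) :
    pd4 (fun q => f q * g q) m p = pd4 f m p * g p + f p * pd4 g m p := by
  simp [pd4, fderiv_fun_mul hf hg, add_comm, mul_comm]

lemma pd4_sum {ι : Type*} {s : Finset ι} {u : ι → (Fin 4 → ℝ) → ℝ}
    (hu : ∀ i ∈ s, DifferentiableAt ℝ (u i) p) (m : Fin 4) :
    pd4 (fun q => ∑ i ∈ s, u i q) m p = ∑ i ∈ s, pd4 (u i) m p := by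
  simp [pd4, fderiv_fun_sum hu]

lemma pd4_eq_neg_of_eventually_eq_neg (h : ∀ᶠ q in 𝓝 p, f q = -g q) (m : Fin 4) :
    pd4 f m p = -pd4 g m p := by
  have hfg : f =ᶠ[𝓝 p] fun q => -g q := h
  simp [pd4, hfg.fderiv_eq, fderiv_fun_neg]

end PartialDerivative

lemma sum_eta_mul (α : Fin 4) (f : Fin 4 → ℝ) : ∑ μ, eta α μ * f μ = eta α α * f α := by
  simp [eta]

lemma eps4_swap (a b c d : Fin 4) : eps4 a b c d = -eps4 b a c d := by
  unfold eps4
  ring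

/-- The Hodge dual `(*F)_{αβ} = (1/2) Σ η^{μμ} η^{νν} ε_{αβμν} F_{μν}` of a 2-form, given by its
matrix of components; antisymmetry of `F` is not built in. The metric being diagonal, each
contraction is written as a single sum. -/
noncomputable def twoFormHodge (F : Fin 4 → Fin 4 → ℝ) (α β : Fin 4) : ℝ :=
  (1 / 2) * ∑ μ, ∑ ν, eta μ μ * eta ν ν * eps4 α β μ ν * F μ ν

/-- The full contraction `⟨F, G⟩ = Σ η^{αα} η^{μμ} F_{αμ} G_{αμ}`, which counts every
unordered pair of indices twice. -/
noncomputable def twoFormInner (F G : Fin 4 → Fin 4 → ℝ) : ℝ :=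
  ∑ α, ∑ μ, eta α α * eta μ μ * (F α μ * G α μ)

/-- The Maxwell stress tensor, polarised to a bilinear form in two electromagnetic fields:
`T(F, G)_{αγ} = Σ η^{μμ} (F_{αμ} G_{γμ} + (*F)_{αμ} (*G)_{γμ})`. -/
noncomputable def maxwellStress (F G : Fin 4 → Fin 4 → ℝ) (α γ : Fin 4) : ℝ :=
  ∑ μ, eta μ μ * (F α μ * G γ μ + twoFormHodge F α μ * twoFormHodge G γ μ)

/-- The source-free Maxwell equations for the first derivatives `D l a b = ∂_l F_{ab}` of an
electromagnetic field at one point. -/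
structure IsMaxwellJet (D : Fin 4 → Fin 4 → Fin 4 → ℝ) : Prop where
  antisymm : ∀ l a b, D l a b = -D l b a
  div_eq_zero : ∀ b, ∑ a, eta a a * D a a b = 0
  cyclic : ∀ l a b, D l a b + D a b l + D b l a = 0

/-- The array `l a b ↦ ∂_l F_{ab}(p)` of first derivatives of a field of 2-forms. -/
noncomputable def twoFormGrad (F : (Fin 4 → ℝ) → Fin 4 → Fin 4 → ℝ) (p : Fin 4 → ℝ)
    (l a b : Fin 4) : ℝ :=
  pd4 (fun q => F q a b) l p

section TwoForm

variable (F G : Fin 4 → Fin 4 → ℝ)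

lemma twoFormHodge_antisymm (a b : Fin 4) : twoFormHodge F a b = -twoFormHodge F b a := by
  simp [twoFormHodge, eps4_swap a b]

lemma twoFormHodge_eq_components :
    twoFormHodge F =
      ![![0, (F 2 3 - F 3 2) / 2, (F 3 1 - F 1 3) / 2, (F 1 2 - F 2 1) / 2],
        ![(F 3 2 - F 2 3) / 2, 0, (F 3 0 - F 0 3) / 2, (F 0 2 - F 2 0) / 2],
        ![(F 1 3 - F 3 1) / 2, (F 0 3 - F 3 0) / 2, 0, (F 1 0 - F 0 1) / 2],
        ![(F 2 1 - F 1 2) / 2, (F 2 0 - F 0 2) / 2, (F 0 1 - F 1 0) / 2, 0]] := by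
  ext a b
  fin_cases a <;> fin_cases b <;> simp [twoFormHodge, Fin.sum_univ_four, eta, eps4] <;> ring

variable {F}

lemma twoFormInner_hodge (hF : ∀ a b, F a b = -F b a) :
    twoFormInner (twoFormHodge F) (twoFormHodge G) = -twoFormInner F G := by
  have hdiag (a) : F a a = 0 := self_eq_neg.mp (hF a a)
  simp [twoFormInner, twoFormHodge_eq_components, Fin.sum_univ_four, eta, hdiag, hF 1 0, hF 2 0,
    hF 3 0, hF 2 1, hF 3 1, hF 3 2]
  ring

end TwoForm

section MaxwellJet

variable {F : Fin 4 → Fin 4 → ℝ} {D : Fin 4 → Fin 4 → Fin 4 → ℝ}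

lemma sum_eta_mul_twoFormHodge_eq (D : Fin 4 → Fin 4 → Fin 4 → ℝ) (b : Fin 4) :
    ∑ a, eta a a * twoFormHodge (D a) a b =
      -(1 / 6) * ∑ l, ∑ m, ∑ n, eta l l * eta m m * eta n n * eps4 b l m n *
        (D l m n + D m n l + D n l m) := by
  fin_cases b <;> simp [twoFormHodge_eq_components, Fin.sum_univ_four, eta, eps4] <;> ring

lemma twoFormHodge_cyclic_eq (D : Fin 4 → Fin 4 → Fin 4 → ℝ) (l a b : Fin 4) :
    twoFormHodge (D l) a b + twoFormHodge (D a) b l + twoFormHodge (D b) l a =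
      ∑ m, eps4 l a b m * eta m m * ((∑ n, eta n n * (D n n m - D n m n)) / 2) := by
  fin_cases l <;> fin_cases a <;> fin_cases b <;>
    simp [twoFormHodge_eq_components, Fin.sum_univ_four, eta, eps4] <;> ring

namespace IsMaxwellJet

lemma hodge (hD : IsMaxwellJet D) : IsMaxwellJet fun l => twoFormHodge (D l) where
  antisymm l := twoFormHodge_antisymm (D l)
  div_eq_zero b := by simp [sum_eta_mul_twoFormHodge_eq, hD.cyclic]
  cyclic l a b := by
    have hdiv (m) : ∑ n, eta n n * (D n n m - D n m n) = 0 := by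
      have hterm (n) : D n n m - D n m n = 2 * D n n m := by rw [hD.antisymm n m n]; ring
      simp only [hterm, mul_left_comm _ (2 : ℝ), ← Finset.mul_sum, hD.div_eq_zero, mul_zero]
    simp [twoFormHodge_cyclic_eq, hdiv]

lemma sum_mul_eq_twoFormInner (hD : IsMaxwellJet D) (hF : ∀ a b, F a b = -F b a) (γ : Fin 4) :
    ∑ α, ∑ μ, eta α α * eta μ μ * (F α μ * D α γ μ) = twoFormInner F (D γ) / 2 := by
  have hswap : ∑ α, ∑ μ, eta α α * eta μ μ * (F α μ * D α γ μ) =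
      ∑ α, ∑ μ, eta α α * eta μ μ * (-F α μ * D μ γ α) := by
    rw [Finset.sum_comm]
    refine Finset.sum_congr rfl fun α _ => Finset.sum_congr rfl fun μ _ => ?_
    rw [hF μ α]
    ring
  have hcyclic (α μ) : D γ α μ = D α γ μ - D μ γ α := by
    linear_combination hD.cyclic γ α μ - hD.antisymm α γ μ
  have hinner : twoFormInner F (D γ) = ∑ α, ∑ μ, eta α α * eta μ μ * (F α μ * D α γ μ) +
      ∑ α, ∑ μ, eta α α * eta μ μ * (-F α μ * D μ γ α) := by
    simp only [twoFormInner, ← Finset.sum_add_distrib]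
    refine Finset.sum_congr rfl fun α _ => Finset.sum_congr rfl fun μ _ => ?_
    rw [hcyclic]
    ring
  linarith

lemma sum_maxwellStress_left_eq_zero (hD : IsMaxwellJet D) (F : Fin 4 → Fin 4 → ℝ) (γ : Fin 4) :
    ∑ α, eta α α * maxwellStress (D α) F α γ = 0 := by
  calc ∑ α, eta α α * maxwellStress (D α) F α γ
      = ∑ μ, eta μ μ * ((∑ α, eta α α * D α α μ) * F γ μ +
          (∑ α, eta α α * twoFormHodge (D α) α μ) * twoFormHodge F γ μ) := by
        simp only [maxwellStress, Finset.mul_sum, Finset.sum_mul, ← Finset.sum_add_distrib]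
        rw [Finset.sum_comm]
        refine Finset.sum_congr rfl fun μ _ => Finset.sum_congr rfl fun α _ => ?_
        ring
    _ = 0 := by simp [hD.div_eq_zero, hD.hodge.div_eq_zero]

lemma sum_maxwellStress_right_eq_zero (hD : IsMaxwellJet D) (hF : ∀ a b, F a b = -F b a)
    (γ : Fin 4) : ∑ α, eta α α * maxwellStress F (D α) α γ = 0 := by
  calc ∑ α, eta α α * maxwellStress F (D α) α γ
      = ∑ α, ∑ μ, eta α α * eta μ μ * (F α μ * D α γ μ) +
          ∑ α, ∑ μ, eta α α * eta μ μ * (twoFormHodge F α μ * twoFormHodge (D α) γ μ) := by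
        simp only [maxwellStress, Finset.mul_sum, ← Finset.sum_add_distrib]
        refine Finset.sum_congr rfl fun α _ => Finset.sum_congr rfl fun μ _ => ?_
        ring
    _ = twoFormInner F (D γ) / 2 + twoFormInner (twoFormHodge F) (twoFormHodge (D γ)) / 2 := by
        rw [hD.sum_mul_eq_twoFormInner hF,
          hD.hodge.sum_mul_eq_twoFormInner (twoFormHodge_antisymm F)]
    _ = 0 := by
        rw [twoFormInner_hodge (D γ) hF]
        ring

end IsMaxwellJet

end MaxwellJet

section TwoFormField

variable {F G : (Fin 4 → ℝ) → Fin 4 → Fin 4 → ℝ} {p : Fin 4 → ℝ}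

lemma differentiableAt_twoFormHodge (hF : ∀ a b, DifferentiableAt ℝ (fun q => F q a b) p)
    (a b : Fin 4) : DifferentiableAt ℝ (fun q => twoFormHodge (F q) a b) p := by
  unfold twoFormHodge
  fun_prop

lemma pd4_twoFormHodge (hF : ∀ a b, DifferentiableAt ℝ (fun q => F q a b) p) (a b m : Fin 4) :
    pd4 (fun q => twoFormHodge (F q) a b) m p = twoFormHodge (twoFormGrad F p m) a b := by
  unfold twoFormHodge twoFormGrad
  rw [pd4_const_mul (by fun_prop), pd4_sum fun _ _ => by fun_prop]
  congr! 2 with μ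
  rw [pd4_sum fun _ _ => by fun_prop]
  congr! 1 with ν
  exact pd4_const_mul (hF μ ν) _ m

lemma differentiableAt_maxwellStress (hF : ∀ a b, DifferentiableAt ℝ (fun q => F q a b) p)
    (hG : ∀ a b, DifferentiableAt ℝ (fun q => G q a b) p) (α γ : Fin 4) :
    DifferentiableAt ℝ (fun q => maxwellStress (F q) (G q) α γ) p := by
  have hdualF := differentiableAt_twoFormHodge hF
  have hdualG := differentiableAt_twoFormHodge hG
  unfold maxwellStress
  fun_prop

lemma pd4_maxwellStress (hF : ∀ a b, DifferentiableAt ℝ (fun q => F q a b) p)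
    (hG : ∀ a b, DifferentiableAt ℝ (fun q => G q a b) p) (α γ m : Fin 4) :
    pd4 (fun q => maxwellStress (F q) (G q) α γ) m p =
      maxwellStress (twoFormGrad F p m) (G p) α γ +
        maxwellStress (F p) (twoFormGrad G p m) α γ := by
  have hdualF := differentiableAt_twoFormHodge hF
  have hdualG := differentiableAt_twoFormHodge hG
  unfold maxwellStress
  rw [pd4_sum fun _ _ => by fun_prop, ← Finset.sum_add_distrib]
  refine Finset.sum_congr rfl fun μ _ => ?_
  rw [pd4_const_mul (by fun_prop), pd4_add (by fun_prop) (by fun_prop),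
    pd4_mul (hF α μ) (hG γ μ), pd4_mul (hdualF α μ) (hdualG γ μ),
    pd4_twoFormHodge hF, pd4_twoFormHodge hG]
  simp only [twoFormGrad]
  ring

theorem maxwellStress_divergence_free (hF : ∀ a b, DifferentiableAt ℝ (fun q => F q a b) p)
    (hG : ∀ a b, DifferentiableAt ℝ (fun q => G q a b) p)
    (hanti : ∀ a b, F p a b = -F p b a)
    (hmaxF : IsMaxwellJet (twoFormGrad F p)) (hmaxG : IsMaxwellJet (twoFormGrad G p))
    (γ : Fin 4) : ∑ α, eta α α * pd4 (fun q => maxwellStress (F q) (G q) α γ) α p = 0 := by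
  simp only [pd4_maxwellStress hF hG, mul_add, Finset.sum_add_distrib,
    hmaxF.sum_maxwellStress_left_eq_zero, hmaxG.sum_maxwellStress_right_eq_zero hanti, add_zero]

end TwoFormField

lemma hodge_eq_twoFormHodge (W : Fin 4 → Fin 4 → Fin 4 → Fin 4 → ℝ) (α β γ δ : Fin 4) :
    hodge W α β γ δ = twoFormHodge (fun a b => W a b γ δ) α β := by
  simp [hodge, twoFormHodge, eta]

lemma belRobinson_eq_sum_maxwellStress (W : Fin 4 → Fin 4 → Fin 4 → Fin 4 → ℝ)
    (α β γ δ : Fin 4) :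
    belRobinson W α β γ δ =
      ∑ ν, eta ν ν * maxwellStress (fun a b => W a b β ν) (fun a b => W a b δ ν) α γ := by
  simp only [belRobinson, maxwellStress, ← hodge_eq_twoFormHodge, Finset.mul_sum, mul_assoc]
  rw [Finset.sum_comm]
  refine Finset.sum_congr rfl fun ν _ => Finset.sum_congr rfl fun μ _ => ?_
  simp only [← Finset.mul_sum, sum_eta_mul]
  ring

lemma pd4_belRobinson {W : (Fin 4 → ℝ) → Fin 4 → Fin 4 → Fin 4 → Fin 4 → ℝ} {p : Fin 4 → ℝ}
    (hW : ∀ α β γ δ, DifferentiableAt ℝ (fun q => W q α β γ δ) p) (α β γ δ m : Fin 4) :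
    pd4 (fun q => belRobinson (W q) α β γ δ) m p = ∑ ν, eta ν ν *
      pd4 (fun q => maxwellStress (fun a b => W q a b β ν) (fun a b => W q a b δ ν) α γ) m p := by
  have hstress (ν) := differentiableAt_maxwellStress
    (fun a b => hW a b β ν) (fun a b => hW a b δ ν) α γ
  simp only [belRobinson_eq_sum_maxwellStress]
  rw [pd4_sum fun ν _ => (hstress ν).const_mul _]
  exact Finset.sum_congr rfl fun ν _ => pd4_const_mul (hstress ν) _ m

theorem belRobinson_divergence_free_general
    {W : (Fin 4 → ℝ) → Fin 4 → Fin 4 → Fin 4 → Fin 4 → ℝ} {p : Fin 4 → ℝ}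
    (hdiff : ∀ α β γ δ, DifferentiableAt ℝ (fun q => W q α β γ δ) p)
    (hanti : ∀ᶠ q in 𝓝 p, ∀ α β γ δ, W q α β γ δ = -W q β α γ δ)
    (hdiv : ∀ β γ δ, ∑ α, ∑ μ, eta α μ * pd4 (fun q => W q α β γ δ) μ p = 0)
    (hcyclic : ∀ l α β γ δ, pd4 (fun q => W q α β γ δ) l p + pd4 (fun q => W q β l γ δ) α p +
      pd4 (fun q => W q l α γ δ) β p = 0)
    (β γ δ : Fin 4) :
    ∑ α, ∑ μ, eta α μ * pd4 (fun q => belRobinson (W q) α β γ δ) μ p = 0 := by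
  have hmax (c d) : IsMaxwellJet (twoFormGrad (fun q a b => W q a b c d) p) :=
    { antisymm := fun l a b =>
        pd4_eq_neg_of_eventually_eq_neg (hanti.mono fun _ hq => hq a b c d) l
      div_eq_zero := fun b => by simpa only [twoFormGrad, sum_eta_mul] using hdiv b c d
      cyclic := fun l a b => hcyclic l a b c d }
  calc ∑ α, ∑ μ, eta α μ * pd4 (fun q => belRobinson (W q) α β γ δ) μ p
      = ∑ ν, eta ν ν * ∑ α, eta α α * pd4 (fun q =>
          maxwellStress (fun a b => W q a b β ν) (fun a b => W q a b δ ν) α γ) α p := by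
        simp only [sum_eta_mul]
        simp only [pd4_belRobinson hdiff, Finset.mul_sum]
        rw [Finset.sum_comm]
        exact Finset.sum_congr rfl fun ν _ => Finset.sum_congr rfl fun α _ => mul_left_comm ..
    _ = 0 := Finset.sum_eq_zero fun ν _ => mul_eq_zero_of_right _ <|
        maxwellStress_divergence_free (fun a b => hdiff a b β ν) (fun a b => hdiff a b δ ν)
          (fun a b => hanti.self_of_nhds a b β ν) (hmax β ν) (hmax δ ν) γ

/-- If `W` is a smooth Weyl field on `ℝ⁴` satisfying the vacuum Bianchi equations, then
its Bel-Robinson tensor field is divergence-free: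
`Σ_{α,μ} η^{αμ} ∂_μ Q_{αβγδ} = 0`. -/
theorem belRobinson_divergence_free
    (W : (Fin 4 → ℝ) → Fin 4 → Fin 4 → Fin 4 → Fin 4 → ℝ)
    (hSmooth : ∀ α β γ δ : Fin 4, ContDiff ℝ (⊤ : ℕ∞) fun p => W p α β γ δ)
    (hWeyl : ∀ p, IsWeylTensor (W p))
    (hBianchiDiv : ∀ (p : Fin 4 → ℝ) (β γ δ : Fin 4),
      ∑ α, ∑ μ, eta α μ * pd4 (fun q => W q α β γ δ) μ p = 0)
    (hBianchiFull : ∀ (p : Fin 4 → ℝ) (l α β γ δ : Fin 4),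
      pd4 (fun q => W q α β γ δ) l p + pd4 (fun q => W q β l γ δ) α p +
        pd4 (fun q => W q l α γ δ) β p = 0) :
    ∀ (p : Fin 4 → ℝ) (β γ δ : Fin 4),
      ∑ α, ∑ μ, eta α μ * pd4 (fun q => belRobinson (W q) α β γ δ) μ p = 0 := by
  intro p
  exact belRobinson_divergence_free_general
    (fun α β γ δ => (hSmooth α β γ δ).differentiable (by simp) p)
    (.of_forall fun q => (hWeyl q).1) (hBianchiDiv p) (hBianchiFull p)
end

section
/- Let ψ₀, ψ₁ : ℝ³ → ℝ be smooth compactly supported functions and let ψ : ℝ × ℝ³ → ℝ be the smooth solution of the free wave equation -∂_t²ψ + Δψ = 0 with ψ(0,·) = ψ₀ and ∂_tψ(0,·) = ψ₁. Then there exists a constant C (depending on ψ₀ and ψ₁) such that for all t ≥ 0 and all x ∈ ℝ³: |ψ(t,x)| ≤ C (1+t+|x|)^{-1} (1+|t-|x||)^{-1/2}. -/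
open MeasureTheory

/-- Applying a vector field `V` (as a first-order differential operator) to a function. -/
noncomputable def applyV (V : (ℝ × (Fin 3 → ℝ)) → ℝ × (Fin 3 → ℝ))
    (ψ : (ℝ × (Fin 3 → ℝ)) → ℝ) : (ℝ × (Fin 3 → ℝ)) → ℝ :=
  fun p => fderiv ℝ ψ p (V p)

/-- The time translation `∂_t`. -/
noncomputable def transT : (ℝ × (Fin 3 → ℝ)) → ℝ × (Fin 3 → ℝ) := fun _ => (1, 0)

/-- The spatial translation `∂_{x_i}`. -/
noncomputable def transX (i : Fin 3) : (ℝ × (Fin 3 → ℝ)) → ℝ × (Fin 3 → ℝ) :=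
  fun _ => (0, Pi.single i 1)

/-!
For a `C²` function `v` on an `n`-dimensional Euclidean space and a rotation field `A`, the
derivative of `w ↦ Dv(x + rw)(Aw)` along `A` has mean zero over the unit sphere. Summing over the
rotation generators `A` shows that `r (Δv - D²v(w, w)) - (n - 1) Dv(w)`, evaluated at `x + rw`, has
mean zero. If `n = 3`, `u` solves the wave equation and `v = u(t - r, ·)`, this expression is minus
the derivative in `r` of `u + r (∂ₜ + ∂_w) u` along the backward light cone `(t - r, x + rw)`, so
the spherical mean of the latter at `r = t` equals its value `u(t, x)` at `r = 0`: this is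
Kirchhoff's formula.

Data supported in the ball of radius `R` are therefore only seen by the directions `w` with
`|x + tw| ≤ R`. There are none unless `||t| - |x|| ≤ R`, and they always form a set of measure
`O((1 + |t|)⁻²)`, because the shell over that cap between the radii `|t|` and `|t| + 1` lies in a
ball of radius `R + 1`. So `u = O((1 + |t|)⁻¹)`, and all weights in `||t| - |x||` are bounded on the
support of `u`.
-/

open Metric Set Filter Module
open scoped InnerProductSpace Laplacian Pointwise

section ParametricIntegral

variable {K F : Type*} [TopologicalSpace K] [CompactSpace K] [MeasurableSpace K]
  [OpensMeasurableSpace K] [NormedAddCommGroup F] {μ : Measure K} [IsFiniteMeasure μ]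

lemma integrable_of_continuous_of_compactSpace {f : K → F} (hf : Continuous f) :
    Integrable f μ :=
  hf.integrable_of_hasCompactSupport (.of_compactSpace f)

lemma hasDerivAt_integral_of_continuous_of_compactSpace [NormedSpace ℝ F] {f f' : ℝ → K → F}
    (hf : ∀ r, Continuous (f r)) (hf' : Continuous fun q : ℝ × K => f' q.1 q.2)
    (hderiv : ∀ r k, HasDerivAt (fun s => f s k) (f' r k) r) (r : ℝ) :
    HasDerivAt (fun s => ∫ k, f s k ∂μ) (∫ k, f' r k ∂μ) r := by
  have hcompact : IsCompact (closedBall r 1 ×ˢ (univ : Set K)) :=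
    (isCompact_closedBall r 1).prod isCompact_univ
  obtain ⟨M, hM⟩ := hcompact.exists_bound_of_continuousOn hf'.continuousOn
  have hf'r : Continuous (f' r) := hf'.comp (by fun_prop : Continuous fun k : K => (r, k))
  exact (hasDerivAt_integral_of_dominated_loc_of_deriv_le (closedBall_mem_nhds r one_pos)
    (.of_forall fun s => (integrable_of_continuous_of_compactSpace (hf s)).aestronglyMeasurable)
    (integrable_of_continuous_of_compactSpace (hf r))
    (integrable_of_continuous_of_compactSpace hf'r).aestronglyMeasurable
    (.of_forall fun k s hs => hM (s, k) ⟨hs, mem_univ k⟩)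
    (integrable_const M) (.of_forall fun k s _ => hderiv s k)).2

end ParametricIntegral

section SphereMeasure

variable {E G F : Type*} [NormedAddCommGroup E] [InnerProductSpace ℝ E]
  [NormedAddCommGroup G] [InnerProductSpace ℝ G]

lemma mapsTo_unitSphere_of_linearIsometryEquiv (L : E ≃ₗᵢ[ℝ] G) :
    MapsTo L (sphere 0 1) (sphere 0 1) := by
  simpa using L.isometry.mapsTo_sphere 0 1

variable [FiniteDimensional ℝ E] [MeasurableSpace E] [BorelSpace E] [FiniteDimensional ℝ G]
  [MeasurableSpace G] [BorelSpace G] [NormedAddCommGroup F] [NormedSpace ℝ F]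

lemma measurePreserving_toSphere_of_linearIsometryEquiv (L : E ≃ₗᵢ[ℝ] G) :
    MeasurePreserving (mapsTo_unitSphere_of_linearIsometryEquiv L).restrict
      (volume : Measure E).toSphere (volume : Measure G).toSphere := by
  set e := (mapsTo_unitSphere_of_linearIsometryEquiv L).restrict
  have he : Measurable e :=
    (L.continuous.restrict (mapsTo_unitSphere_of_linearIsometryEquiv L)).measurable
  refine ⟨he, Measure.ext fun s hs => ?_⟩
  have coe_preimage : ((↑) '' (e ⁻¹' s) : Set E) = L.symm '' ((↑) '' s) := by
    ext y
    constructor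
    · rintro ⟨w, hw, rfl⟩
      exact ⟨L w, ⟨e w, hw, rfl⟩, L.symm_apply_apply w⟩
    · rintro ⟨_, ⟨w, hw, rfl⟩, rfl⟩
      exact ⟨⟨L.symm w, mapsTo_unitSphere_of_linearIsometryEquiv L.symm w.2⟩,
        by simpa [e, MapsTo.restrict, Subtype.map] using hw, rfl⟩
  have cone_preimage :
      Ioo (0 : ℝ) 1 • ((↑) '' (e ⁻¹' s) : Set E) = L ⁻¹' (Ioo (0 : ℝ) 1 • ((↑) '' s)) := by
    rw [coe_preimage]
    exact (image_image2_distrib_right fun a y => L.symm.map_smul a y).symm.trans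
      (L.symm.image_eq_preimage_symm _)
  rw [Measure.map_apply he hs, Measure.toSphere_apply' _ hs, Measure.toSphere_apply' _ (he hs),
    cone_preimage, L.measurePreserving.measure_preimage_emb L.toHomeomorph.measurableEmbedding,
    L.toLinearEquiv.finrank_eq]

lemma integral_toSphere_comp_linearIsometryEquiv (L : E ≃ₗᵢ[ℝ] G) {f : G → F}
    (hf : Continuous f) :
    ∫ w : sphere (0 : E) 1, f (L w) ∂(volume : Measure E).toSphere =
      ∫ w : sphere (0 : G) 1, f w ∂(volume : Measure G).toSphere := by
  have hL := measurePreserving_toSphere_of_linearIsometryEquiv L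
  rw [← hL.map_eq]
  exact (integral_map hL.aemeasurable (hf.comp continuous_subtype_val).aestronglyMeasurable).symm

end SphereMeasure

lemma toSphere_real_univ_pos {E : Type*} [NormedAddCommGroup E] [NormedSpace ℝ E]
    [FiniteDimensional ℝ E] [Nontrivial E] [MeasurableSpace E] [BorelSpace E] (μ : Measure E)
    [μ.IsAddHaarMeasure] : 0 < μ.toSphere.real univ :=
  have : NeZero μ.toSphere := ⟨Measure.toSphere_ne_zero μ⟩
  measureReal_univ_pos

lemma ofReal_pow_le_volumeIoiPow (n : ℕ) {t : ℝ} (ht : 0 ≤ t) :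
    ENNReal.ofReal (t ^ n) ≤ Measure.volumeIoiPow n ((↑) ⁻¹' Ioo t (t + 1)) := by
  have hmeas : MeasurableSet ((↑) ⁻¹' Ioo t (t + 1) : Set (Ioi (0 : ℝ))) :=
    measurable_subtype_coe measurableSet_Ioo
  have hvol : Measure.comap Subtype.val volume ((↑) ⁻¹' Ioo t (t + 1) : Set (Ioi (0 : ℝ))) = 1 := by
    rw [(measurePreserving_subtype_coe measurableSet_Ioi).measure_preimage
      measurableSet_Ioo.nullMeasurableSet, Measure.restrict_apply measurableSet_Ioo,
      inter_eq_left.2 (Ioo_subset_Ioi_self.trans (Ioi_subset_Ioi ht)), Real.volume_Ioo]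
    simp
  rw [Measure.volumeIoiPow, withDensity_apply _ hmeas]
  calc ENNReal.ofReal (t ^ n)
      = ∫⁻ _ in ((↑) ⁻¹' Ioo t (t + 1) : Set (Ioi (0 : ℝ))), ENNReal.ofReal (t ^ n)
          ∂(Measure.comap Subtype.val volume) := by rw [setLIntegral_const, hvol, mul_one]
    _ ≤ _ := setLIntegral_mono' hmeas fun r hr => by have := hr.1.le; gcongr

section SphericalCap

variable {E : Type*} [NormedAddCommGroup E] [NormedSpace ℝ E] [FiniteDimensional ℝ E]
  [MeasurableSpace E] [BorelSpace E] (μ : Measure E) [μ.IsAddHaarMeasure]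

lemma toSphere_mul_pow_le_measure_closedBall_of_nonneg (x : E) (R : ℝ) {t : ℝ} (ht : 0 ≤ t) :
    μ.toSphere {w | ‖x + t • (w : E)‖ ≤ R} * ENNReal.ofReal (t ^ (finrank ℝ E - 1)) ≤
      μ (closedBall 0 (R + 1)) := by
  set A : Set (sphere (0 : E) 1) := {w | ‖x + t • (w : E)‖ ≤ R}
  have hA : MeasurableSet A := (isClosed_le (by fun_prop) continuous_const).measurableSet
  have shell_subset : ((↑) '' (homeomorphUnitSphereProd E ⁻¹' A ×ˢ ((↑) ⁻¹' Ioo t (t + 1))) : Set E)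
      ⊆ closedBall (-x) (R + 1) := by
    rintro _ ⟨y, ⟨hyA, hyt⟩, rfl⟩
    obtain ⟨⟨w, s⟩, rfl⟩ := (homeomorphUnitSphereProd E).symm.surjective y
    rw [(homeomorphUnitSphereProd E).apply_symm_apply] at hyA hyt
    have hs : |(s : ℝ) - t| ≤ 1 := abs_le.2 ⟨by linarith [hyt.1], by linarith [hyt.2]⟩
    rw [mem_closedBall, dist_eq_norm, sub_neg_eq_add, homeomorphUnitSphereProd_symm_apply_coe]
    calc ‖(s : ℝ) • (w : E) + x‖ = ‖(x + t • (w : E)) + ((s : ℝ) - t) • (w : E)‖ := by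
            congr 1; module
      _ ≤ ‖x + t • (w : E)‖ + ‖((s : ℝ) - t) • (w : E)‖ := norm_add_le _ _
      _ ≤ R + 1 := add_le_add hyA (by simpa [norm_smul] using hs)
  calc μ.toSphere A * ENNReal.ofReal (t ^ (finrank ℝ E - 1))
      ≤ μ.toSphere A * Measure.volumeIoiPow (finrank ℝ E - 1) ((↑) ⁻¹' Ioo t (t + 1)) := by
        gcongr; exact ofReal_pow_le_volumeIoiPow _ ht
    _ = μ ((↑) '' (homeomorphUnitSphereProd E ⁻¹' A ×ˢ ((↑) ⁻¹' Ioo t (t + 1)))) := by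
        rw [← Measure.prod_prod, ← μ.measurePreserving_homeomorphUnitSphereProd.measure_preimage
          (hA.prod (measurable_subtype_coe measurableSet_Ioo)).nullMeasurableSet,
          comap_subtype_coe_apply (measurableSet_singleton _).compl]
    _ ≤ μ (closedBall (-x) (R + 1)) := measure_mono shell_subset
    _ = μ (closedBall 0 (R + 1)) := Measure.addHaar_closedBall_center _ _ _

lemma toSphere_real_mul_pow_le_measure_closedBall (x : E) (R t : ℝ) :
    μ.toSphere.real {w | ‖x + t • (w : E)‖ ≤ R} * |t| ^ (finrank ℝ E - 1) ≤
      μ.real (closedBall 0 (R + 1)) := by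
  obtain ⟨x', hx'⟩ : ∃ x', ∀ w : E, ‖x + t • w‖ = ‖x' + |t| • w‖ := by
    rcases abs_cases t with ⟨h, -⟩ | ⟨h, -⟩
    · exact ⟨x, fun w => by rw [h]⟩
    · exact ⟨-x, fun w => by rw [h, neg_smul, ← neg_add, norm_neg]⟩
  simp only [hx']
  have := ENNReal.toReal_mono measure_closedBall_lt_top.ne
    (toSphere_mul_pow_le_measure_closedBall_of_nonneg μ x' R (abs_nonneg t))
  rwa [ENNReal.toReal_mul, ENNReal.toReal_ofReal (by positivity)] at this

end SphericalCap

section RotationGenerator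

variable {E F : Type*} [NormedAddCommGroup E] [InnerProductSpace ℝ E]

/-- The infinitesimal rotation `u ∧ v` in the plane spanned by `u` and `v`; for orthonormal
`u`, `v` it maps `u` to `v` and `v` to `-u`. -/
noncomputable def rotationGenerator (u v : E) : E →L[ℝ] E :=
  InnerProductSpace.rankOne ℝ v u - InnerProductSpace.rankOne ℝ u v

lemma rotationGenerator_apply (u v w : E) :
    rotationGenerator u v w = ⟪u, w⟫_ℝ • v - ⟪v, w⟫_ℝ • u := rfl

lemma rotationGenerator_mem_skewAdjoint [CompleteSpace E] (u v : E) :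
    rotationGenerator u v ∈ skewAdjoint (E →L[ℝ] E) := by
  simp [skewAdjoint.mem_iff, rotationGenerator, ContinuousLinearMap.star_eq_adjoint]

variable {ι : Type*} [Fintype ι] (b : OrthonormalBasis ι ℝ E)

lemma sum_rotationGenerator_comp_self (w : E) :
    ∑ i, ∑ j, rotationGenerator (b i) (b j) (rotationGenerator (b i) (b j) w) =
      -(2 * ((finrank ℝ E : ℝ) - 1)) • w := by
  classical
  have term (i j : ι) : rotationGenerator (b i) (b j) (rotationGenerator (b i) (b j) w) =
      (if i = j then (2 * ⟪b i, w⟫_ℝ) • b i else 0) - ⟪b i, w⟫_ℝ • b i - ⟪b j, w⟫_ℝ • b j := by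
    by_cases hij : i = j
    · subst hij
      simp only [rotationGenerator_apply, sub_self, inner_zero_right, zero_smul, if_true]
      module
    · simp only [rotationGenerator_apply, inner_sub_right, inner_smul_right, b.inner_eq_ite,
        if_true, if_neg hij, if_neg (Ne.symm hij)]
      module
  have hcard (z : E) : ∑ _i : ι, z = (finrank ℝ E : ℝ) • z := by
    rw [Finset.sum_const, Finset.card_univ, ← finrank_eq_card_basis b.toBasis,
      Nat.cast_smul_eq_nsmul]
  simp only [term, Finset.sum_sub_distrib, Finset.sum_ite_eq, Finset.mem_univ, if_true, mul_smul,
    hcard, ← Finset.smul_sum, b.sum_repr']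
  module

lemma sum_bilin_rotationGenerator_self [NormedAddCommGroup F] [NormedSpace ℝ F]
    (B : E →L[ℝ] E →L[ℝ] F) (w : E) :
    ∑ i, ∑ j, B (rotationGenerator (b i) (b j) w) (rotationGenerator (b i) (b j) w) =
      (2 : ℝ) • (‖w‖ ^ 2 • ∑ i, B (b i) (b i) - B w w) := by
  have hB : B w w = ∑ i, ∑ j, (⟪b i, w⟫_ℝ * ⟪b j, w⟫_ℝ) • B (b j) (b i) := by
    conv_lhs => rw [← b.sum_repr' w]
    simp only [map_sum, map_smul, sum_apply, smul_apply, Finset.smul_sum, smul_smul]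
  have hB' : B w w = ∑ i, ∑ j, (⟪b i, w⟫_ℝ * ⟪b j, w⟫_ℝ) • B (b i) (b j) := by
    rw [hB, Finset.sum_comm]
    simp only [mul_comm]
  have hnorm : ∑ i, ⟪b i, w⟫_ℝ ^ 2 = ‖w‖ ^ 2 := by simpa using b.sum_sq_norm_inner_right w
  have term (i j : ι) :
      B (rotationGenerator (b i) (b j) w) (rotationGenerator (b i) (b j) w) =
        ⟪b i, w⟫_ℝ ^ 2 • B (b j) (b j) + ⟪b j, w⟫_ℝ ^ 2 • B (b i) (b i)
          - (⟪b i, w⟫_ℝ * ⟪b j, w⟫_ℝ) • B (b j) (b i)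
          - (⟪b i, w⟫_ℝ * ⟪b j, w⟫_ℝ) • B (b i) (b j) := by
    simp only [rotationGenerator_apply, map_sub, map_smul, sub_apply, smul_apply]
    module
  simp only [term, Finset.sum_sub_distrib, Finset.sum_add_distrib, ← hB, ← hB', ← Finset.smul_sum,
    ← Finset.sum_smul, hnorm]
  module

end RotationGenerator

section ExpSkewAdjoint

variable {E : Type*} [NormedAddCommGroup E] [CompleteSpace E]

lemma hasDerivAt_exp_smul_apply [NormedSpace ℝ E] (A : E →L[ℝ] E) (θ : ℝ) (w : E) :
    HasDerivAt (fun s : ℝ => NormedSpace.exp (s • A) w) (A (NormedSpace.exp (θ • A) w)) θ := by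
  simpa using (hasDerivAt_exp_smul_const' A θ).clm_apply (hasDerivAt_const θ w)

lemma exists_linearIsometryEquiv_eq_exp_smul [InnerProductSpace ℝ E] {A : E →L[ℝ] E}
    (hA : A ∈ skewAdjoint (E →L[ℝ] E)) (θ : ℝ) :
    ∃ L : E ≃ₗᵢ[ℝ] E, ∀ w, L w = NormedSpace.exp (θ • A) w := by
  let : NormedAlgebra ℚ (E →L[ℝ] E) := .restrictScalars ℚ ℝ _
  have hexp : NormedSpace.exp (θ • A) ∈ unitary (E →L[ℝ] E) :=
    NormedSpace.exp_mem_unitary_of_mem_skewAdjoint (skewAdjoint.smul_mem θ hA)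
  exact ⟨Unitary.linearIsometryEquiv ⟨_, hexp⟩, fun w => rfl⟩

end ExpSkewAdjoint

lemma fderiv_fderiv_add_smul_clm_apply {E F : Type*} [NormedAddCommGroup E] [NormedSpace ℝ E]
    [NormedAddCommGroup F] [NormedSpace ℝ F] {v : E → F} (hv : ContDiff ℝ 2 v) (A : E →L[ℝ] E)
    (x : E) (r : ℝ) (w a : E) :
    fderiv ℝ (fun w => fderiv ℝ v (x + r • w) (A w)) w a =
      r • fderiv ℝ (fderiv ℝ v) (x + r • w) a (A w) + fderiv ℝ v (x + r • w) (A a) := by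
  have hv' : HasFDerivAt (fderiv ℝ v) (fderiv ℝ (fderiv ℝ v) (x + r • w)) (x + r • w) :=
    ((hv.fderiv_right (m := 1) le_rfl).differentiable one_ne_zero _).hasFDerivAt
  have hxr : HasFDerivAt (fun w : E => x + r • w) (r • ContinuousLinearMap.id ℝ E) w :=
    ((hasFDerivAt_id w).const_smul r).const_add x
  have hprod := ((hv'.comp w hxr).clm_apply A.hasFDerivAt).fderiv
  simp only [Function.comp_apply] at hprod
  simp [hprod, add_comm]

section RotationInvariance

variable {E F : Type*} [NormedAddCommGroup E] [InnerProductSpace ℝ E] [FiniteDimensional ℝ E]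
  [NormedAddCommGroup F] [NormedSpace ℝ F]

lemma laplacian_eq_sum_fderiv_fderiv {ι : Type*} [Fintype ι] (b : OrthonormalBasis ι ℝ E)
    (v : E → F) (y : E) : Δ v y = ∑ i, fderiv ℝ (fderiv ℝ v) y (b i) (b i) := by
  simp [InnerProductSpace.laplacian_eq_iteratedFDeriv_orthonormalBasis v b,
    iteratedFDeriv_two_apply]

variable [MeasurableSpace E] [BorelSpace E]

lemma integral_toSphere_fderiv_apply_of_mem_skewAdjoint {h : E → F} (hh : ContDiff ℝ 1 h)
    {A : E →L[ℝ] E} (hA : A ∈ skewAdjoint (E →L[ℝ] E)) :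
    ∫ w : sphere (0 : E) 1, fderiv ℝ h w (A w) ∂(volume : Measure E).toSphere = 0 := by
  have exp_continuous : Continuous fun θ : ℝ => NormedSpace.exp (θ • A) :=
    continuous_iff_continuousAt.2 fun θ => (hasDerivAt_exp_smul_const' A θ).continuousAt
  have exp_apply_continuous :
      Continuous fun q : ℝ × sphere (0 : E) 1 => NormedSpace.exp (q.1 • A) (q.2 : E) :=
    (exp_continuous.comp continuous_fst).clm_apply (continuous_subtype_val.comp continuous_snd)
  have fderiv_continuous : Continuous (fderiv ℝ h) := hh.continuous_fderiv one_ne_zero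
  have hderiv := hasDerivAt_integral_of_continuous_of_compactSpace
    (μ := (volume : Measure E).toSphere)
    (f := fun θ w => h (NormedSpace.exp (θ • A) w))
    (f' := fun θ w => fderiv ℝ h (NormedSpace.exp (θ • A) w) (A (NormedSpace.exp (θ • A) w)))
    (fun θ => hh.continuous.comp (by fun_prop))
    ((fderiv_continuous.comp exp_apply_continuous).clm_apply
      (A.continuous.comp exp_apply_continuous))
    (fun θ w => (hh.differentiable one_ne_zero _).hasFDerivAt.comp_hasDerivAt θ
      (hasDerivAt_exp_smul_apply A θ w)) 0
  have hconst (θ : ℝ) : ∫ w : sphere (0 : E) 1, h (NormedSpace.exp (θ • A) w)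
      ∂(volume : Measure E).toSphere =
        ∫ w : sphere (0 : E) 1, h w ∂(volume : Measure E).toSphere := by
    obtain ⟨L, hL⟩ := exists_linearIsometryEquiv_eq_exp_smul hA θ
    simp only [← hL]
    exact integral_toSphere_comp_linearIsometryEquiv L hh.continuous
  simp only [hconst] at hderiv
  simpa using hderiv.unique (hasDerivAt_const 0 _)

lemma integral_toSphere_laplacian {v : E → F} (hv : ContDiff ℝ 2 v) (x : E) (r : ℝ) :
    ∫ w : sphere (0 : E) 1, (r • (Δ v (x + r • (w : E))
        - fderiv ℝ (fderiv ℝ v) (x + r • (w : E)) w w)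
      - ((finrank ℝ E : ℝ) - 1) • fderiv ℝ v (x + r • (w : E)) w)
        ∂(volume : Measure E).toSphere = 0 := by
  let b := stdOrthonormalBasis ℝ E
  let A (i j) := rotationGenerator (b i) (b j)
  let h (i j) (w : E) : F := fderiv ℝ v (x + r • w) (A i j w)
  have hh (i j) : ContDiff ℝ 1 (h i j) :=
    ((hv.fderiv_right (m := 1) le_rfl).comp (by fun_prop)).clm_apply (A i j).contDiff
  have hsum (w : sphere (0 : E) 1) : ∑ i, ∑ j, fderiv ℝ (h i j) w (A i j w) =
      (2 : ℝ) • (r • (Δ v (x + r • (w : E)) - fderiv ℝ (fderiv ℝ v) (x + r • (w : E)) w w)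
      - ((finrank ℝ E : ℝ) - 1) • fderiv ℝ v (x + r • (w : E)) w) := by
    simp only [h, A, fderiv_fderiv_add_smul_clm_apply hv, Finset.sum_add_distrib, ← Finset.smul_sum,
      ← map_sum, sum_rotationGenerator_comp_self, sum_bilin_rotationGenerator_self,
      norm_eq_of_mem_sphere, laplacian_eq_sum_fderiv_fderiv b, map_smul]
    module
  have hint (i j) : Integrable (fun w : sphere (0 : E) 1 => fderiv ℝ (h i j) w (A i j w))
      (volume : Measure E).toSphere :=
    integrable_of_continuous_of_compactSpace
      ((((hh i j).continuous_fderiv one_ne_zero).comp continuous_subtype_val).clm_apply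
        ((A i j).continuous.comp continuous_subtype_val))
  have hzero : ∫ w : sphere (0 : E) 1, ∑ i, ∑ j, fderiv ℝ (h i j) w (A i j w)
      ∂(volume : Measure E).toSphere = 0 := by
    rw [integral_finsetSum _ fun i _ => integrable_finsetSum _ fun j _ => hint i j]
    refine Finset.sum_eq_zero fun i _ => ?_
    rw [integral_finsetSum _ fun j _ => hint i j]
    exact Finset.sum_eq_zero fun j _ => integral_toSphere_fderiv_apply_of_mem_skewAdjoint (hh i j)
      (rotationGenerator_mem_skewAdjoint _ _)
  simp only [hsum, integral_smul] at hzero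
  exact (smul_eq_zero_iff_right two_ne_zero).1 hzero

end RotationInvariance

section Slice

variable {G G' F : Type*} [NormedAddCommGroup G] [NormedSpace ℝ G] [NormedAddCommGroup G']
  [NormedSpace ℝ G'] [NormedAddCommGroup F] [NormedSpace ℝ F]

lemma fderiv_comp_const_add_clm {f : G' → F} (hf : Differentiable ℝ f) (c : G') (L : G →L[ℝ] G')
    (y : G) : fderiv ℝ (fun y => f (c + L y)) y = (fderiv ℝ f (c + L y)).comp L :=
  ((hf _).hasFDerivAt.comp y (L.hasFDerivAt.const_add c)).fderiv

lemma fderiv_fderiv_comp_const_add_clm {f : G' → F} (hf : ContDiff ℝ 2 f) (c : G')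
    (L : G →L[ℝ] G') (y a b : G) :
    fderiv ℝ (fderiv ℝ fun y => f (c + L y)) y a b =
      fderiv ℝ (fderiv ℝ f) (c + L y) (L a) (L b) := by
  have hf' : Differentiable ℝ (fderiv ℝ f) :=
    (hf.fderiv_right (m := 1) le_rfl).differentiable one_ne_zero
  have hfderiv : fderiv ℝ (fun y => f (c + L y)) =
      fun y => ContinuousLinearMap.precomp F L (fderiv ℝ f (c + L y)) :=
    funext (fderiv_comp_const_add_clm (hf.differentiable two_ne_zero) c L)
  have hchain : HasFDerivAt (fun y => ContinuousLinearMap.precomp F L (fderiv ℝ f (c + L y)))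
      ((ContinuousLinearMap.precomp F L).comp ((fderiv ℝ (fderiv ℝ f) (c + L y)).comp L)) y :=
    (ContinuousLinearMap.precomp F L).hasFDerivAt.comp y
      ((hf' _).hasFDerivAt.comp y (L.hasFDerivAt.const_add c))
  rw [hfderiv, hchain.fderiv]
  rfl

variable {E : Type*} [NormedAddCommGroup E] [NormedSpace ℝ E] {u : ℝ × E → F}

lemma fderiv_slice (hu : Differentiable ℝ u) (t : ℝ) (x a : E) :
    fderiv ℝ (fun y => u (t, y)) x a = fderiv ℝ u (t, x) (0, a) := by
  simpa using DFunLike.congr_fun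
    (fderiv_comp_const_add_clm hu (t, 0) (ContinuousLinearMap.inr ℝ ℝ E) x) a

lemma fderiv_fderiv_slice (hu : ContDiff ℝ 2 u) (t : ℝ) (x a b : E) :
    fderiv ℝ (fderiv ℝ fun y => u (t, y)) x a b = fderiv ℝ (fderiv ℝ u) (t, x) (0, a) (0, b) := by
  simpa using fderiv_fderiv_comp_const_add_clm hu (t, 0) (ContinuousLinearMap.inr ℝ ℝ E) x a b

lemma deriv_slice (hu : Differentiable ℝ u) (t : ℝ) (x : E) :
    deriv (fun τ => u (τ, x)) t = fderiv ℝ u (t, x) (1, 0) := by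
  simpa using DFunLike.congr_fun
    (fderiv_comp_const_add_clm hu (0, x) (ContinuousLinearMap.inl ℝ ℝ E) t) 1

lemma iteratedDeriv_two_slice (hu : ContDiff ℝ 2 u) (t : ℝ) (x : E) :
    iteratedDeriv 2 (fun τ => u (τ, x)) t = fderiv ℝ (fderiv ℝ u) (t, x) (1, 0) (1, 0) := by
  rw [iteratedDeriv_eq_iteratedFDeriv, iteratedFDeriv_two_apply]
  simpa using fderiv_fderiv_comp_const_add_clm hu (0, x) (ContinuousLinearMap.inl ℝ ℝ E) t 1 1

end Slice

section CauchyData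

variable {E F : Type*} [NormedAddCommGroup E] [NormedSpace ℝ E] [NormedAddCommGroup F]
  [NormedSpace ℝ F] {u : ℝ × E → F}

/-- The pointwise size of the Cauchy data of `u` on the initial slice `t = 0`: the norm of `u` plus
the norm of its spacetime derivative. -/
noncomputable def cauchyDataNorm (u : ℝ × E → F) (y : E) : ℝ :=
  ‖u (0, y)‖ + ‖fderiv ℝ u (0, y)‖

lemma continuous_cauchyDataNorm (hu : ContDiff ℝ 1 u) : Continuous (cauchyDataNorm u) := by
  have hslice : Continuous fun y : E => ((0 : ℝ), y) := by fun_prop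
  exact (hu.continuous.comp hslice).norm.add ((hu.continuous_fderiv one_ne_zero).comp hslice).norm

lemma hasCompactSupport_cauchyDataNorm (hu : Differentiable ℝ u)
    (h₀ : HasCompactSupport fun x => u (0, x))
    (h₁ : HasCompactSupport fun x => deriv (fun τ => u (τ, x)) 0) :
    HasCompactSupport (cauchyDataNorm u) := by
  refine .intro (h₀.isCompact.union h₁.isCompact) fun y hy => ?_
  obtain ⟨hy₀, hy₁⟩ := not_or.1 hy
  have hvalue : u (0, y) = 0 := image_eq_zero_of_notMem_tsupport (f := fun x => u (0, x)) hy₀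
  have hspace (a : E) : fderiv ℝ u (0, y) (0, a) = 0 := by
    rw [← fderiv_slice hu, fderiv_of_notMem_tsupport ℝ hy₀, zero_apply]
  have htime : fderiv ℝ u (0, y) (1, 0) = 0 := by
    rw [← deriv_slice hu]
    exact image_eq_zero_of_notMem_tsupport (f := fun x => deriv (fun τ => u (τ, x)) 0) hy₁
  have hfderiv : fderiv ℝ u (0, y) = 0 := ContinuousLinearMap.ext fun ⟨τ, a⟩ =>
    calc fderiv ℝ u (0, y) (τ, a) = fderiv ℝ u (0, y) (τ • (1, 0) + (0, a)) := by simp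
      _ = 0 := by rw [map_add, map_smul, htime, hspace, smul_zero, add_zero]
  rw [cauchyDataNorm, hvalue, hfderiv, norm_zero, norm_zero, add_zero]

end CauchyData

section KirchhoffIntegrand

variable {E F : Type*} [NormedAddCommGroup E] [NormedSpace ℝ E] [NormedAddCommGroup F]
  [NormedSpace ℝ F] {u : ℝ × E → F}

/-- The integrand of Kirchhoff's formula for `u` at `p = (t, x)`, evaluated at the point
`(t - r, x + r w)` of the light cone with vertex `p`, where `w` is a unit vector. -/
noncomputable def kirchhoffIntegrand (u : ℝ × E → F) (p : ℝ × E) (r : ℝ) (w : E) : F :=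
  u (p.1 - r, p.2 + r • w) + r • fderiv ℝ u (p.1 - r, p.2 + r • w) (1, w)

lemma kirchhoffIntegrand_zero (p : ℝ × E) (w : E) : kirchhoffIntegrand u p 0 w = u p := by
  simp [kirchhoffIntegrand]

lemma continuous_kirchhoffIntegrand (hu : ContDiff ℝ 1 u) (p : ℝ × E) (r : ℝ) :
    Continuous (kirchhoffIntegrand u p r) := by
  have hcone : Continuous fun w : E => (p.1 - r, p.2 + r • w) := by fun_prop
  exact (hu.continuous.comp hcone).add ((((hu.continuous_fderiv one_ne_zero).comp hcone).clm_apply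
    (by fun_prop)).const_smul r)

lemma norm_kirchhoffIntegrand_le (t : ℝ) (x : E) {w : E} (hw : ‖w‖ = 1) :
    ‖kirchhoffIntegrand u (t, x) t w‖ ≤ (1 + |t|) * cauchyDataNorm u (x + t • w) := by
  set Du := fderiv ℝ u (0, x + t • w) with hDu
  have hdir : ‖((1 : ℝ), w)‖ = 1 := by simp [hw]
  calc ‖kirchhoffIntegrand u (t, x) t w‖ = ‖u (0, x + t • w) + t • Du (1, w)‖ := by
        rw [kirchhoffIntegrand, sub_self]
    _ ≤ ‖u (0, x + t • w)‖ + |t| * ‖Du‖ := norm_add_le_of_le le_rfl <| by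
        rw [norm_smul, Real.norm_eq_abs]
        gcongr
        simpa [hdir] using Du.le_opNorm (1, w)
    _ ≤ (1 + |t|) * cauchyDataNorm u (x + t • w) := by
        rw [cauchyDataNorm, ← hDu]
        nlinarith [norm_nonneg Du, mul_nonneg (abs_nonneg t) (norm_nonneg (u (0, x + t • w)))]

lemma kirchhoffIntegrand_eq_zero {t : ℝ} {x w : E} (hw : ‖w‖ = 1)
    (h : cauchyDataNorm u (x + t • w) = 0) : kirchhoffIntegrand u (t, x) t w = 0 :=
  norm_le_zero_iff.1 ((norm_kirchhoffIntegrand_le t x hw).trans_eq (mul_eq_zero_of_right _ h))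

lemma hasDerivAt_kirchhoffIntegrand (hu : ContDiff ℝ 2 u) (p : ℝ × E) (r : ℝ) (w : E) :
    HasDerivAt (fun r => kirchhoffIntegrand u p r w)
      (fderiv ℝ u (p.1 - r, p.2 + r • w) (-1, w) + fderiv ℝ u (p.1 - r, p.2 + r • w) (1, w) +
        r • fderiv ℝ (fderiv ℝ u) (p.1 - r, p.2 + r • w) (-1, w) (1, w)) r := by
  have hcone : HasDerivAt (fun r : ℝ => (p.1 - r, p.2 + r • w)) (-1, w) r := by
    simpa using ((hasDerivAt_id r).const_sub p.1).prodMk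
      (((hasDerivAt_id r).smul_const w).const_add p.2)
  have hu' : Differentiable ℝ (fderiv ℝ u) :=
    (hu.fderiv_right (m := 1) le_rfl).differentiable one_ne_zero
  have hfst := (hu.differentiable two_ne_zero _).hasFDerivAt.comp_hasDerivAt r hcone
  have hsnd := ((hu' _).hasFDerivAt.comp_hasDerivAt r hcone).clm_apply
    (hasDerivAt_const r ((1 : ℝ), w))
  refine (hfst.add ((hasDerivAt_id r).smul hsnd)).congr_deriv ?_
  simp only [id, one_smul, map_zero, add_zero, Function.comp_apply]
  abel

end KirchhoffIntegrand

section WaveEquation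

variable {E F : Type*} [NormedAddCommGroup E] [InnerProductSpace ℝ E] [FiniteDimensional ℝ E]
  [NormedAddCommGroup F] [NormedSpace ℝ F] {u : ℝ × E → F}

/-- A classical (`C²`) solution `u (t, x)` on `ℝ × E` of the free wave equation `∂ₜ²u = Δu`. -/
structure IsWaveSolution (u : ℝ × E → F) : Prop where
  contDiff : ContDiff ℝ 2 u
  wave_eq : ∀ t x, iteratedDeriv 2 (fun τ => u (τ, x)) t = Δ (fun y => u (t, y)) x

namespace IsWaveSolution

/-- The wave equation turns the derivative of the Kirchhoff integrand along the light cone into the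
integrand of `integral_toSphere_laplacian` on a time slice in dimension three. -/
lemma deriv_kirchhoffIntegrand_eq (hu : IsWaveSolution u) (t r : ℝ) (x w : E) :
    fderiv ℝ u (t, x) (-1, w) + fderiv ℝ u (t, x) (1, w) +
        r • fderiv ℝ (fderiv ℝ u) (t, x) (-1, w) (1, w) =
      -(r • (Δ (fun y => u (t, y)) x - fderiv ℝ (fderiv ℝ fun y => u (t, y)) x w w)
        - (2 : ℝ) • fderiv ℝ (fun y => u (t, y)) x w) := by
  have hsymm : fderiv ℝ (fderiv ℝ u) (t, x) (1, 0) (0, w) =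
      fderiv ℝ (fderiv ℝ u) (t, x) (0, w) (1, 0) :=
    (hu.contDiff.contDiffAt.isSymmSndFDerivAt (by simp)).eq _ _
  have hneg : ((-1 : ℝ), w) = (0, w) - (1, 0) := by simp
  have hpos : ((1 : ℝ), w) = (0, w) + (1, 0) := by simp
  rw [← hu.wave_eq, iteratedDeriv_two_slice hu.contDiff, fderiv_fderiv_slice hu.contDiff,
    fderiv_slice (hu.contDiff.differentiable two_ne_zero), hneg, hpos]
  simp only [map_add, map_sub, sub_apply, hsymm]
  module

variable [MeasurableSpace E] [BorelSpace E]

lemma integral_kirchhoffIntegrand_eq (hu : IsWaveSolution u) (hE : finrank ℝ E = 3) (p : ℝ × E)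
    (r s : ℝ) :
    ∫ w : sphere (0 : E) 1, kirchhoffIntegrand u p r w ∂(volume : Measure E).toSphere =
      ∫ w : sphere (0 : E) 1, kirchhoffIntegrand u p s w ∂(volume : Measure E).toSphere := by
  have hcone : Continuous fun q : ℝ × sphere (0 : E) 1 => (p.1 - q.1, p.2 + q.1 • (q.2 : E)) := by
    fun_prop
  have hDu : ContDiff ℝ 1 (fderiv ℝ u) := hu.contDiff.fderiv_right le_rfl
  have hDu_cone := hDu.continuous.comp hcone
  have hD2u_cone := (hDu.continuous_fderiv one_ne_zero).comp hcone
  have hderiv (r : ℝ) := hasDerivAt_integral_of_continuous_of_compactSpace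
    (μ := (volume : Measure E).toSphere) (f := fun r w => kirchhoffIntegrand u p r w)
    (fun r => (continuous_kirchhoffIntegrand (hu.contDiff.of_le one_le_two) p r).comp
      continuous_subtype_val)
    (((hDu_cone.clm_apply (by fun_prop)).add (hDu_cone.clm_apply (by fun_prop))).add
      (continuous_fst.smul ((hD2u_cone.clm_apply (by fun_prop)).clm_apply (by fun_prop))))
    (fun r w => hasDerivAt_kirchhoffIntegrand hu.contDiff p r w) r
  refine is_const_of_deriv_eq_zero (fun r => (hderiv r).differentiableAt) (fun r => ?_) r s
  have hslice : ContDiff ℝ 2 fun y => u (p.1 - r, y) := hu.contDiff.comp (by fun_prop)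
  have hlaplacian := integral_toSphere_laplacian hslice p.2 r
  rw [hE, show ((3 : ℕ) : ℝ) - 1 = 2 by norm_num] at hlaplacian
  simp only [(hderiv r).deriv, hu.deriv_kirchhoffIntegrand_eq, integral_neg, hlaplacian, neg_zero]

theorem kirchhoff [CompleteSpace F] (hu : IsWaveSolution u) (hE : finrank ℝ E = 3) (t : ℝ)
    (x : E) :
    (volume : Measure E).toSphere.real univ • u (t, x) =
      ∫ w : sphere (0 : E) 1, kirchhoffIntegrand u (t, x) t w ∂(volume : Measure E).toSphere := by
  rw [hu.integral_kirchhoffIntegrand_eq hE (t, x) t 0]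
  simp only [kirchhoffIntegrand_zero, integral_const]

end IsWaveSolution

end WaveEquation

lemma one_le_rpow_abs_mul_rpow {a b : ℝ} (ha : 1 ≤ a) (hab : a ≤ b) (s : ℝ) :
    1 ≤ b ^ |s| * a ^ s := by
  have ha₀ : 0 < a := by linarith
  calc (1 : ℝ) ≤ a ^ (|s| + s) := Real.one_le_rpow ha (by linarith [neg_abs_le s])
    _ = a ^ |s| * a ^ s := Real.rpow_add ha₀ _ _
    _ ≤ b ^ |s| * a ^ s := by gcongr

section Decay

variable {E F : Type*} [NormedAddCommGroup E] [InnerProductSpace ℝ E] [FiniteDimensional ℝ E]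
  [NormedAddCommGroup F] [NormedSpace ℝ F] [CompleteSpace F] {u : ℝ × E → F} {R : ℝ}

namespace IsWaveSolution

theorem strong_huygens (hu : IsWaveSolution u) (hE : finrank ℝ E = 3)
    (hR : ∀ y, R < ‖y‖ → cauchyDataNorm u y = 0) {t : ℝ} {x : E}
    (htx : R < |(|t| - ‖x‖)|) : u (t, x) = 0 := by
  borelize E
  have : Nontrivial E := nontrivial_of_finrank_pos (R := ℝ) (by omega)
  have hvanish (w : sphere (0 : E) 1) : kirchhoffIntegrand u (t, x) t w = 0 := by
    refine kirchhoffIntegrand_eq_zero (norm_eq_of_mem_sphere w) (hR _ (htx.trans_le ?_))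
    simpa [norm_smul, abs_sub_comm] using abs_norm_sub_norm_le x (-(t • (w : E)))
  have hmean := hu.kirchhoff hE t x
  simp only [hvanish, integral_zero] at hmean
  exact (smul_eq_zero_iff_right (toSphere_real_univ_pos volume).ne').1 hmean

lemma norm_le_mul_toSphere_real_div [MeasurableSpace E] [BorelSpace E] (hu : IsWaveSolution u)
    (hE : finrank ℝ E = 3) {M : ℝ} (hR : ∀ y, R < ‖y‖ → cauchyDataNorm u y = 0)
    (hM : ∀ y, ‖y‖ ≤ R → cauchyDataNorm u y ≤ M) (t : ℝ) (x : E) :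
    ‖u (t, x)‖ ≤ (1 + |t|) * M * (volume : Measure E).toSphere.real {w | ‖x + t • (w : E)‖ ≤ R} /
      (volume : Measure E).toSphere.real univ := by
  set σ := (volume : Measure E).toSphere
  set A : Set (sphere (0 : E) 1) := {w | ‖x + t • (w : E)‖ ≤ R}
  have : Nontrivial E := nontrivial_of_finrank_pos (R := ℝ) (by omega)
  have hvanish : ∀ w ∉ A, kirchhoffIntegrand u (t, x) t w = 0 := fun w hw =>
    kirchhoffIntegrand_eq_zero (norm_eq_of_mem_sphere w) (hR _ (not_le.1 hw))
  have hbound : ∀ w ∈ A, ‖kirchhoffIntegrand u (t, x) t w‖ ≤ (1 + |t|) * M := fun w hw =>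
    (norm_kirchhoffIntegrand_le t x (norm_eq_of_mem_sphere w)).trans (by gcongr; exact hM _ hw)
  rw [le_div_iff₀ (toSphere_real_univ_pos volume)]
  calc ‖u (t, x)‖ * σ.real univ = ‖σ.real univ • u (t, x)‖ := by
        rw [norm_smul, Real.norm_of_nonneg measureReal_nonneg, mul_comm]
    _ = ‖∫ w in A, kirchhoffIntegrand u (t, x) t w ∂σ‖ := by
        rw [hu.kirchhoff hE, setIntegral_eq_integral_of_forall_compl_eq_zero hvanish]
    _ ≤ (1 + |t|) * M * σ.real A :=
        norm_setIntegral_le_of_norm_le_const (measure_lt_top σ A) hbound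

lemma exists_norm_le_mul_one_add_abs_inv (hu : IsWaveSolution u) (hE : finrank ℝ E = 3)
    (hR : ∀ y, R < ‖y‖ → cauchyDataNorm u y = 0) :
    ∃ C, ∀ t x, ‖u (t, x)‖ ≤ C * (1 + |t|)⁻¹ := by
  borelize E
  set σ := (volume : Measure E).toSphere
  obtain ⟨M, hM⟩ := (isCompact_closedBall (0 : E) R).exists_bound_of_continuousOn
    (continuous_cauchyDataNorm (hu.contDiff.of_le one_le_two)).continuousOn
  have hM' (y : E) (hy : ‖y‖ ≤ R) : cauchyDataNorm u y ≤ |M| :=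
    (le_abs_self _).trans ((hM y (mem_closedBall_zero_iff.2 hy)).trans (le_abs_self M))
  refine ⟨|M| * (2 * (σ.real univ + volume.real (closedBall (0 : E) (R + 1)))) / σ.real univ,
    fun t x => (hu.norm_le_mul_toSphere_real_div hE hR hM' t x).trans ?_⟩
  have hcap := toSphere_real_mul_pow_le_measure_closedBall (volume : Measure E) x R t
  rw [hE, show 3 - 1 = 2 from rfl] at hcap
  set a := σ.real {w | ‖x + t • (w : E)‖ ≤ R}
  have ha : a ≤ σ.real univ := measureReal_mono (subset_univ _)
  have hweight : (1 + |t|) * a ≤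
      2 * (σ.real univ + volume.real (closedBall (0 : E) (R + 1))) * (1 + |t|)⁻¹ := by
    rw [← div_eq_mul_inv, le_div_iff₀ (by positivity)]
    nlinarith [mul_nonneg (measureReal_nonneg : 0 ≤ a) (sq_nonneg (1 - |t|))]
  calc (1 + |t|) * |M| * a / σ.real univ = |M| * ((1 + |t|) * a) / σ.real univ := by ring
    _ ≤ |M| * (2 * (σ.real univ + volume.real (closedBall (0 : E) (R + 1))) * (1 + |t|)⁻¹) /
          σ.real univ := by gcongr
    _ = _ := by ring

end IsWaveSolution

end Decay

theorem linear_wave_sharp_decay_general {E F : Type*} [NormedAddCommGroup E]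
    [InnerProductSpace ℝ E] [FiniteDimensional ℝ E] [NormedAddCommGroup F] [NormedSpace ℝ F]
    [CompleteSpace F] (hE : finrank ℝ E = 3) {u : ℝ × E → F} (hu : IsWaveSolution u)
    (h₀ : HasCompactSupport fun x => u (0, x))
    (h₁ : HasCompactSupport fun x => deriv (fun τ => u (τ, x)) 0) (s : ℝ) :
    ∃ C, ∀ t x, ‖u (t, x)‖ ≤ C * (1 + |t| + ‖x‖)⁻¹ * (1 + |(|t| - ‖x‖)|) ^ s := by
  obtain ⟨R, hR₀, hR_le⟩ := (hasCompactSupport_cauchyDataNorm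
    (hu.contDiff.differentiable two_ne_zero) h₀ h₁).exists_pos_le_norm
  have hR (y : E) (hy : R < ‖y‖) : cauchyDataNorm u y = 0 := hR_le y hy.le
  obtain ⟨C, hC⟩ := hu.exists_norm_le_mul_one_add_abs_inv hE hR
  have hC₀ : 0 ≤ C := by simpa using (norm_nonneg _).trans (hC 0 0)
  refine ⟨C * (2 + R) * (1 + R) ^ |s|, fun t x => ?_⟩
  rcases lt_or_ge R |(|t| - ‖x‖)| with htx | htx
  · rw [hu.strong_huygens hE hR htx, norm_zero]
    positivity
  have hx : (1 + |t|)⁻¹ ≤ (2 + R) * (1 + |t| + ‖x‖)⁻¹ := by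
    rw [← div_eq_mul_inv, inv_le_comm₀ (by positivity) (by positivity), inv_div,
      div_le_iff₀ (by positivity)]
    nlinarith [(abs_le.1 htx).1, abs_nonneg t]
  calc ‖u (t, x)‖ ≤ C * (1 + |t|)⁻¹ * 1 := by rw [mul_one]; exact hC t x
    _ ≤ C * ((2 + R) * (1 + |t| + ‖x‖)⁻¹) * ((1 + R) ^ |s| * (1 + |(|t| - ‖x‖)|) ^ s) := by
        gcongr
        exact one_le_rpow_abs_mul_rpow (le_add_of_nonneg_right (abs_nonneg _)) (by gcongr) s
    _ = _ := by ring

section Coordinates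

lemma enorm3_eq_norm_toLp (x : Fin 3 → ℝ) : enorm3 x = ‖WithLp.toLp 2 x‖ := by
  simp [enorm3, EuclideanSpace.norm_eq]

lemma applyV_applyV_const {ψ : ℝ × (Fin 3 → ℝ) → ℝ} (hψ : ContDiff ℝ 2 ψ)
    (a b p : ℝ × (Fin 3 → ℝ)) :
    applyV (fun _ => a) (applyV (fun _ => b) ψ) p = fderiv ℝ (fderiv ℝ ψ) p a b := by
  have hDψ : DifferentiableAt ℝ (fderiv ℝ ψ) p :=
    (hψ.fderiv_right (m := 1) le_rfl).differentiable one_ne_zero p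
  have hDψb : fderiv ℝ (fun q => fderiv ℝ ψ q b) p = (fderiv ℝ (fderiv ℝ ψ) p).flip b := by
    simpa using (hDψ.hasFDerivAt.clm_apply (hasFDerivAt_const b p)).fderiv
  exact DFunLike.congr_fun hDψb a

lemma laplacian_comp_ofLp {ι F : Type*} [Fintype ι] [NormedAddCommGroup F] [NormedSpace ℝ F]
    [DecidableEq ι] {u : ℝ × (ι → ℝ) → F} (hu : ContDiff ℝ 2 u) (t : ℝ) (x : EuclideanSpace ℝ ι) :
    Δ (fun y : EuclideanSpace ℝ ι => u (t, y.ofLp)) x =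
      ∑ i, fderiv ℝ (fderiv ℝ u) (t, x.ofLp) (0, Pi.single i 1) (0, Pi.single i 1) := by
  rw [laplacian_eq_sum_fderiv_fderiv (EuclideanSpace.basisFun ι ℝ)]
  refine Finset.sum_congr rfl fun i _ => ?_
  simpa [PiLp.coe_continuousLinearEquiv] using fderiv_fderiv_comp_const_add_clm hu (t, 0)
    ((ContinuousLinearMap.inr ℝ ℝ (ι → ℝ)).comp
      (EuclideanSpace.equiv ι ℝ).toContinuousLinearMap) x
    (EuclideanSpace.basisFun ι ℝ i) (EuclideanSpace.basisFun ι ℝ i)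

lemma isWaveSolution_comp_ofLp {ψ : ℝ × (Fin 3 → ℝ) → ℝ} (hψ : ContDiff ℝ 2 ψ)
    (hwave : ∀ p, -(applyV transT (applyV transT ψ) p) +
      ∑ i, applyV (transX i) (applyV (transX i) ψ) p = 0) :
    IsWaveSolution fun p : ℝ × EuclideanSpace ℝ (Fin 3) => ψ (p.1, p.2.ofLp) where
  contDiff := hψ.comp (contDiff_fst.prodMk
    ((EuclideanSpace.equiv (Fin 3) ℝ).contDiff.comp contDiff_snd))
  wave_eq t x := by
    have hsecond : -fderiv ℝ (fderiv ℝ ψ) (t, x.ofLp) (1, 0) (1, 0) +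
        ∑ i, fderiv ℝ (fderiv ℝ ψ) (t, x.ofLp) (0, Pi.single i 1) (0, Pi.single i 1) = 0 := by
      simp only [← applyV_applyV_const hψ]
      exact hwave (t, x.ofLp)
    calc iteratedDeriv 2 (fun τ => ψ (τ, x.ofLp)) t
        = fderiv ℝ (fderiv ℝ ψ) (t, x.ofLp) (1, 0) (1, 0) := iteratedDeriv_two_slice hψ t x.ofLp
      _ = ∑ i, fderiv ℝ (fderiv ℝ ψ) (t, x.ofLp) (0, Pi.single i 1) (0, Pi.single i 1) := by
        linarith
      _ = Δ (fun y : EuclideanSpace ℝ (Fin 3) => ψ (t, y.ofLp)) x :=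
        (laplacian_comp_ofLp hψ t x).symm

end Coordinates

/-- Sharp pointwise decay for solutions of the free wave equation on `ℝ × ℝ³` with
smooth compactly supported initial data:
`|ψ(t,x)| ≤ C (1+t+|x|)⁻¹ (1+|t-|x||)^{-1/2}` for `t ≥ 0`. -/
theorem linear_wave_sharp_decay
    (ψ₀ ψ₁ : (Fin 3 → ℝ) → ℝ)
    (hψ₀ : ContDiff ℝ (⊤ : ℕ∞) ψ₀) (hψ₀s : HasCompactSupport ψ₀)
    (hψ₁ : ContDiff ℝ (⊤ : ℕ∞) ψ₁) (hψ₁s : HasCompactSupport ψ₁)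
    (ψ : (ℝ × (Fin 3 → ℝ)) → ℝ) (hψ : ContDiff ℝ (⊤ : ℕ∞) ψ)
    (hwave : ∀ p : ℝ × (Fin 3 → ℝ),
      -(applyV transT (applyV transT ψ) p) +
        ∑ i, applyV (transX i) (applyV (transX i) ψ) p = 0)
    (hinit : ∀ x : Fin 3 → ℝ, ψ (0, x) = ψ₀ x)
    (hinit' : ∀ x : Fin 3 → ℝ, applyV transT ψ (0, x) = ψ₁ x) :
    ∃ C : ℝ, ∀ t : ℝ, 0 ≤ t → ∀ x : Fin 3 → ℝ,
      |ψ (t, x)| ≤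
        C * (1 + t + enorm3 x)⁻¹ * (1 + |t - enorm3 x|) ^ (-(1 : ℝ) / 2) := by
  have hψ2 : ContDiff ℝ 2 ψ := hψ.of_le (WithTop.coe_le_coe.2 le_top)
  have h₁ (x : Fin 3 → ℝ) : deriv (fun τ => ψ (τ, x)) 0 = ψ₁ x :=
    (deriv_slice (hψ2.differentiable two_ne_zero) 0 x).trans (hinit' x)
  let e := (EuclideanSpace.equiv (Fin 3) ℝ).toHomeomorph
  obtain ⟨C, hC⟩ := linear_wave_sharp_decay_general finrank_euclideanSpace_fin
    (isWaveSolution_comp_ofLp hψ2 hwave)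
    (by simp only [hinit]; exact hψ₀s.comp_homeomorph e)
    (by simp only [h₁]; exact hψ₁s.comp_homeomorph e) (-(1 : ℝ) / 2)
  refine ⟨C, fun t ht x => ?_⟩
  simpa only [enorm3_eq_norm_toLp, abs_of_nonneg ht, Real.norm_eq_abs] using hC t (WithLp.toLp 2 x)
end
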